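/- arXiv:0904.2547 — 3 statements merged into one kernel-verified Lean document; each statement's English description precedes it below -/
import Mathlib

section
/- Let γ > 0 and let u₀ : ℝ → ℝ be a twice continuously differentiable 1-periodic function with ∫₀¹ u₀(x) dx = 0 satisfying |inf_{x∈ℝ} u₀'(x)| ≥ |sup_{x∈ℝ} u₀'(x)| > 0. Then for all sufficiently large positive integers n, the initial data x ↦ u₀(nx) leads to finite-time wave breaking: every periodic classical solution u of the Ostrovsky–Hunter equation on [0,T) with u(0,x) = u₀(nx) and with u_x bounded from below on [0,T) × ℝ has T < ∞. -/
open MeasureTheory Filter Set intervalIntegral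

/-- A periodic (period `1` in `x`) classical solution of the Ostrovsky–Hunter
equation `(u_t + u u_x)_x = γ u` on the set `S` of times (typically `[0,T)`):
`u` is `1`-periodic in `x`, continuously differentiable in `t`, twice
continuously differentiable in `x`, with `u_tx` continuous, and the expanded
equation `u_tx + u_x² + u u_xx = γ u` holds pointwise at positive times of `S`. -/
structure IsPeriodicOHSolution (γ : ℝ) (S : Set ℝ) (u : ℝ → ℝ → ℝ) : Prop where
  periodic : ∀ t ∈ S, ∀ x : ℝ, u t (x + 1) = u t x
  diff_t : ∀ t ∈ S, ∀ x : ℝ, DifferentiableAt ℝ (fun s => u s x) t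
  diff_x : ∀ t ∈ S, ∀ x : ℝ, DifferentiableAt ℝ (u t) x
  diff_xx : ∀ t ∈ S, ∀ x : ℝ, DifferentiableAt ℝ (deriv (u t)) x
  diff_tx : ∀ t ∈ S, ∀ x : ℝ, DifferentiableAt ℝ (fun y => deriv (fun s => u s y) t) x
  cont_u : ContinuousOn (fun p : ℝ × ℝ => u p.1 p.2) (S ×ˢ (Set.univ : Set ℝ))
  cont_ut : ContinuousOn (fun p : ℝ × ℝ => deriv (fun s => u s p.2) p.1)
      (S ×ˢ (Set.univ : Set ℝ))
  cont_ux : ContinuousOn (fun p : ℝ × ℝ => deriv (u p.1) p.2) (S ×ˢ (Set.univ : Set ℝ))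
  cont_uxx : ContinuousOn (fun p : ℝ × ℝ => deriv (deriv (u p.1)) p.2)
      (S ×ˢ (Set.univ : Set ℝ))
  cont_utx : ContinuousOn (fun p : ℝ × ℝ => deriv (fun y => deriv (fun s => u s y) p.1) p.2)
      (S ×ˢ (Set.univ : Set ℝ))
  eqn : ∀ t ∈ S, 0 < t → ∀ x : ℝ,
    deriv (fun y => deriv (fun s => u s y) t) x
      + (deriv (u t) x) ^ 2 + u t x * deriv (deriv (u t)) x = γ * u t x

/-! Let `m(t) = inf_x u_x(t, x)`, attained since `u_x` is continuous and periodic. Where `u_x` is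
minimal `u_xx` vanishes, so there the equation reads `u_tx = γ u - m²`. For `γ ≠ 0`, Rolle's theorem
applied to the periodic flux `u_t + u u_x`, whose `x`-derivative is `γ u`, gives a zero of
`u(t, ·)`; a periodic function with a zero and slopes at least `m` satisfies `|u| ≤ -m`.
Hence `m' ≤ -|γ| m - m²` in the sense of upper right Dini derivatives, and `m` reaches `-∞` no
later than time `2 / |m(0)|` as soon as `m(0) < -2 |γ|`. Passing from `u₀` to `u₀(n ·)` multiplies
`m(0)` by `n`. -/

open scoped Topology

lemma abs_sub_le_of_periodic_of_le_deriv {v : ℝ → ℝ} {c m : ℝ} (hc : 0 < c)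
    (hv : Differentiable ℝ v) (hper : Function.Periodic v c) (hm : ∀ x, m ≤ deriv v x) (x z : ℝ) :
    |v x - v z| ≤ -m * c := by
  obtain ⟨y, ⟨hzy, hyz⟩, hxy⟩ := hper.exists_mem_Ico hc x z
  have hslope := mul_sub_le_image_sub_of_le_deriv hv hm
  have hm_nonpos : m ≤ 0 := by
    have hperiod := hslope (le_add_of_nonneg_right hc.le : z ≤ z + c)
    rw [hper z, sub_self, add_sub_cancel_left] at hperiod
    exact nonpos_of_mul_nonpos_left hperiod hc
  have hleft : m * c ≤ v y - v z :=
    (mul_le_mul_of_nonpos_left (by linarith) hm_nonpos).trans (hslope hzy)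
  have hright : m * c ≤ v z - v y :=
    (mul_le_mul_of_nonpos_left (by linarith) hm_nonpos).trans (hper z ▸ hslope hyz.le)
  rw [hxy, abs_le]
  constructor <;> linarith

lemma exists_deriv_neg_of_periodic {v : ℝ → ℝ} {c : ℝ} (hc : 0 < c) (hv : Differentiable ℝ v)
    (hper : Function.Periodic v c) (hne : ∃ x, deriv v x ≠ 0) : ∃ a, deriv v a < 0 := by
  by_contra! hnonneg
  obtain ⟨x, hx⟩ := hne
  have hconst : v = fun _ => v 0 := funext fun y => by
    simpa [sub_eq_zero] using abs_sub_le_of_periodic_of_le_deriv hc hv hper hnonneg y 0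
  rw [hconst] at hx
  simp at hx

lemma exists_isLeast_range_of_periodic {α : Type*} [TopologicalSpace α] [LinearOrder α]
    [ClosedIicTopology α] {f : ℝ → α} {c : ℝ} (hf : Continuous f) (hc : c ≠ 0)
    (hper : Function.Periodic f c) : ∃ x, IsLeast (range f) (f x) := by
  obtain ⟨_, hleast⟩ := (hper.compact_of_continuous hc hf).exists_isLeast (range_nonempty f)
  obtain ⟨x, rfl⟩ := hleast.1
  exact ⟨x, hleast⟩

lemma continuousOn_iInf_of_periodic {X α : Type*} [TopologicalSpace X] [TopologicalSpace α]
    [ConditionallyCompleteLinearOrder α] [OrderTopology α] {f : X → ℝ → α} {S : Set X} {c : ℝ}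
    (hc : 0 < c) (hper : ∀ t ∈ S, Function.Periodic (f t) c)
    (hf : ContinuousOn (fun p : X × ℝ => f p.1 p.2) (S ×ˢ univ)) :
    ContinuousOn (fun t => ⨅ x, f t x) S := by
  have hcont : Continuous fun p : S × ℝ => f p.1 p.2 :=
    hf.comp_continuous (f := fun p : S × ℝ => ((p.1 : X), p.2)) (by fun_prop)
      fun p => ⟨p.1.2, mem_univ _⟩
  rw [continuousOn_iff_continuous_domRestrict]
  convert (isCompact_Icc (a := (0 : ℝ)) (b := 0 + c)).continuous_sInf
    (f := fun (t : S) x => f t x) hcont using 2 with t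
  rw [(hper t t.2).image_Icc hc]
  rfl

section MixedDerivative

variable {f : ℝ → ℝ → ℝ} {s t x y C : ℝ}

lemma rectangle_increment_le (hst : s ≤ t) (hxy : x ≤ y)
    (hft : ∀ τ ∈ Icc s t, ∀ ξ ∈ Icc x y, DifferentiableAt ℝ (fun σ => f σ ξ) τ)
    (hftx : ∀ τ ∈ Ioo s t, ∀ ξ ∈ Icc x y,
      DifferentiableAt ℝ (fun η => deriv (fun σ => f σ η) τ) ξ)
    (hC : ∀ τ ∈ Ioo s t, ∀ ξ ∈ Ioo x y, deriv (fun η => deriv (fun σ => f σ η) τ) ξ ≤ C) :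
    (f t y - f t x) - (f s y - f s x) ≤ C * (y - x) * (t - s) := by
  have hx : x ∈ Icc x y := left_mem_Icc.2 hxy
  have hy : y ∈ Icc x y := right_mem_Icc.2 hxy
  have hdiff : ∀ τ ∈ Icc s t, DifferentiableAt ℝ (fun σ => f σ y - f σ x) τ := fun τ hτ =>
    (hft τ hτ y hy).sub (hft τ hτ x hx)
  refine (convex_Icc s t).image_sub_le_mul_sub_of_deriv_le (f := fun σ => f σ y - f σ x)
    (fun τ hτ => (hdiff τ hτ).continuousAt.continuousWithinAt)
    (fun τ hτ => (hdiff τ (interior_subset hτ)).differentiableWithinAt) (fun τ hτ => ?_)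
    s (left_mem_Icc.2 hst) t (right_mem_Icc.2 hst) hst
  rw [interior_Icc] at hτ
  have hτ' := Ioo_subset_Icc_self hτ
  rw [deriv_fun_sub (hft τ hτ' y hy) (hft τ hτ' x hx)]
  refine (convex_Icc x y).image_sub_le_mul_sub_of_deriv_le
    (f := fun η => deriv (fun σ => f σ η) τ)
    (fun ξ hξ => (hftx τ hτ ξ hξ).continuousAt.continuousWithinAt)
    (fun ξ hξ => (hftx τ hτ ξ (interior_subset hξ)).differentiableWithinAt) (fun ξ hξ => ?_)
    x hx y hy hxy
  rw [interior_Icc] at hξ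
  exact hC τ hτ ξ hξ

lemma deriv_sub_deriv_le_of_mixed_deriv_le (hst : s ≤ t) (hxy : x < y)
    (hs : DifferentiableAt ℝ (f s) x) (ht : DifferentiableAt ℝ (f t) x)
    (hft : ∀ τ ∈ Icc s t, ∀ ξ ∈ Icc x y, DifferentiableAt ℝ (fun σ => f σ ξ) τ)
    (hftx : ∀ τ ∈ Ioo s t, ∀ ξ ∈ Icc x y,
      DifferentiableAt ℝ (fun η => deriv (fun σ => f σ η) τ) ξ)
    (hC : ∀ τ ∈ Ioo s t, ∀ ξ ∈ Ioo x y, deriv (fun η => deriv (fun σ => f σ η) τ) ξ ≤ C) :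
    deriv (f t) x - deriv (f s) x ≤ C * (t - s) := by
  have hslope := (ht.hasDerivAt.sub hs.hasDerivAt).tendsto_slope.mono_left
    (nhdsGT_le_nhdsNE x)
  refine le_of_tendsto hslope ?_
  filter_upwards [Ioo_mem_nhdsGT hxy] with z ⟨hxz, hzy⟩
  have hsub : Icc x z ⊆ Icc x y := Icc_subset_Icc_right hzy.le
  have hrect := rectangle_increment_le hst hxz.le (fun τ hτ ξ hξ => hft τ hτ ξ (hsub hξ))
    (fun τ hτ ξ hξ => hftx τ hτ ξ (hsub hξ))
    (fun τ hτ ξ hξ => hC τ hτ ξ (Ioo_subset_Ioo_right hzy.le hξ))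
  rw [slope_def_field, div_le_iff₀ (sub_pos.2 hxz)]
  simp only [Pi.sub_apply]
  linarith

end MixedDerivative

section Riccati

variable {m : ℝ → ℝ} {a T T' : ℝ}

lemma hasDerivAt_neg_two_div_sub {t : ℝ} (ht : t ≠ T) :
    HasDerivAt (fun s => -(2 / (T - s))) (-(2 / (T - t) ^ 2)) t := by
  have hne : T - t ≠ 0 := sub_ne_zero.2 ht.symm
  have hderiv := ((hasDerivAt_const t (2 : ℝ)).fun_div ((hasDerivAt_id' t).const_sub T) hne).fun_neg
  exact hderiv.congr_deriv (by ring)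

lemma le_neg_two_div_of_riccati (ha : 0 ≤ a) (haT : a * T < 1) (hT' : T' < T)
    (hcont : ContinuousOn m (Icc 0 T'))
    (hriccati : ∀ t ∈ Ico 0 T', ∀ r, -a * m t - m t ^ 2 < r → ∃ᶠ z in 𝓝[>] t, slope m t z < r)
    (hm : m 0 ≤ -(2 / T)) {t : ℝ} (ht : t ∈ Icc 0 T') : m t ≤ -(2 / (T - t)) := by
  have hderiv : ∀ s ≤ T', HasDerivAt (fun s => -(2 / (T - s))) (-(2 / (T - s) ^ 2)) s :=
    fun s hs => hasDerivAt_neg_two_div_sub (hs.trans_lt hT').ne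
  refine image_le_of_liminf_slope_right_lt_deriv_boundary' hcont hriccati (by simpa using hm)
    (fun s hs => (hderiv s hs.2).continuousAt.continuousWithinAt)
    (fun s hs => (hderiv s hs.2.le).hasDerivWithinAt) (fun s hs hms => ?_) ht
  have hTs : 0 < T - s := by linarith [hs.2]
  have haTs : 0 < 1 - a * (T - s) :=
    sub_pos.2 ((mul_le_mul_of_nonneg_left (by linarith [hs.1]) ha).trans_lt haT)
  -- The barrier `B` satisfies `B' = -B² / 2`, and `-a B - B² < -B² / 2` since `B < -2 a`.
  have hgap : -(2 / (T - s) ^ 2) - (-a * -(2 / (T - s)) - (-(2 / (T - s))) ^ 2)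
      = 2 * (1 - a * (T - s)) / (T - s) ^ 2 := by field_simp; ring
  rw [hms, ← sub_pos, hgap]
  positivity

lemma lifespan_le_of_riccati {m₀ : ℝ} (ha : 0 ≤ a) (hcont : ContinuousOn m (Ico 0 T))
    (hriccati : ∀ t ∈ Ico 0 T, ∀ r, -a * m t - m t ^ 2 < r → ∃ᶠ z in 𝓝[>] t, slope m t z < r)
    (hm : m 0 ≤ m₀) (hm₀ : m₀ < -(2 * a)) : T ≤ 2 / -m₀ := by
  by_contra! hlt
  set T₁ := 2 / -m₀ with hT₁
  have hm₀neg : m₀ < 0 := by linarith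
  have hT₁pos : 0 < T₁ := div_pos two_pos (neg_pos.2 hm₀neg)
  have haT₁ : a * T₁ < 1 := by
    rw [hT₁, ← mul_div_assoc, div_lt_one (neg_pos.2 hm₀neg)]
    linarith
  have hm₀T₁ : m₀ = -(2 / T₁) := by rw [hT₁]; field_simp
  have hbarrier : ∀ t ∈ Ioo 0 T₁, m t ≤ -(2 / (T₁ - t)) := fun t ht =>
    le_neg_two_div_of_riccati ha haT₁ ht.2
      (hcont.mono (Icc_subset_Ico_right (ht.2.trans hlt)))
      (fun s hs => hriccati s ⟨hs.1, hs.2.trans (ht.2.trans hlt)⟩)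
      (hm.trans_eq hm₀T₁) (right_mem_Icc.2 ht.1.le)
  have hlim : Tendsto m (𝓝[<] T₁) (𝓝 (m T₁)) :=
    (hcont.continuousAt (Ico_mem_nhds hT₁pos hlt)).mono_left nhdsWithin_le_nhds
  have hgap : Tendsto (fun t => T₁ - t) (𝓝[<] T₁) (𝓝[>] 0) := by
    refine tendsto_nhdsWithin_iff.2 ⟨?_, ?_⟩
    · exact ((continuous_const.sub continuous_id).tendsto' T₁ 0 (sub_self T₁)).mono_left
        nhdsWithin_le_nhds
    · filter_upwards [self_mem_nhdsWithin] with t (ht : t < T₁) using sub_pos.2 ht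
  have hblowup : Tendsto (fun t => -(2 / (T₁ - t))) (𝓝[<] T₁) atBot := by
    simpa only [div_eq_mul_inv, Function.comp_def, Pi.inv_apply] using
      tendsto_neg_atTop_atBot.comp (hgap.inv_tendsto_nhdsGT_zero.const_mul_atTop two_pos)
  refine not_tendsto_nhds_of_tendsto_atBot (tendsto_atBot_mono' _ ?_ hblowup) _ hlim
  filter_upwards [Ioo_mem_nhdsLT hT₁pos] using hbarrier

end Riccati

namespace IsPeriodicOHSolution

variable {γ T t : ℝ} {S S' : Set ℝ} {u : ℝ → ℝ → ℝ}

lemma mono (h : IsPeriodicOHSolution γ S u) (hS : S' ⊆ S) : IsPeriodicOHSolution γ S' u where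
  periodic t ht := h.periodic t (hS ht)
  diff_t t ht := h.diff_t t (hS ht)
  diff_x t ht := h.diff_x t (hS ht)
  diff_xx t ht := h.diff_xx t (hS ht)
  diff_tx t ht := h.diff_tx t (hS ht)
  cont_u := h.cont_u.mono (prod_mono_left hS)
  cont_ut := h.cont_ut.mono (prod_mono_left hS)
  cont_ux := h.cont_ux.mono (prod_mono_left hS)
  cont_uxx := h.cont_uxx.mono (prod_mono_left hS)
  cont_utx := h.cont_utx.mono (prod_mono_left hS)
  eqn t ht := h.eqn t (hS ht)

lemma continuous_deriv_x (h : IsPeriodicOHSolution γ S u) (ht : t ∈ S) :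
    Continuous (deriv (u t)) :=
  continuous_iff_continuousAt.2 fun x => (h.diff_xx t ht x).continuousAt

lemma periodic_deriv_x (h : IsPeriodicOHSolution γ S u) (ht : t ∈ S) :
    Function.Periodic (deriv (u t)) 1 := fun x => by
  rw [← deriv_comp_add_const, funext (h.periodic t ht)]

lemma periodic_deriv_t (h : IsPeriodicOHSolution γ S u) (ht : t ∈ S)
    (hS : UniqueDiffWithinAt ℝ S t) :
    Function.Periodic (fun x => deriv (fun s => u s x) t) 1 := fun x =>
  hS.eq_deriv S (h.diff_t t ht (x + 1)).hasDerivAt.hasDerivWithinAt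
    ((h.diff_t t ht x).hasDerivAt.hasDerivWithinAt.congr (fun s hs => h.periodic s hs x)
      (h.periodic t ht x))

/-- `eqn` covers only positive times; continuity extends it to `t = 0`. -/
lemma eqn_Ico (h : IsPeriodicOHSolution γ (Ico 0 T) u) (ht : t ∈ Ico 0 T) (x : ℝ) :
    deriv (fun y => deriv (fun s => u s y) t) x + deriv (u t) x ^ 2 + u t x * deriv (deriv (u t)) x
      = γ * u t x := by
  have hEqOn := EqOn.of_subset_closure (s := Ioo 0 T ×ˢ (univ : Set ℝ))
    (fun p hp => h.eqn p.1 (Ioo_subset_Ico_self hp.1) hp.1.1 p.2)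
    ((h.cont_utx.add (h.cont_ux.pow 2)).add (h.cont_u.mul h.cont_uxx))
    (continuousOn_const.mul h.cont_u) (prod_mono_left Ioo_subset_Ico_self) ?_
  · exact hEqOn (x := (t, x)) ⟨ht, mem_univ x⟩
  · rw [closure_prod_eq, closure_Ioo (ht.1.trans_lt ht.2).ne, closure_univ]
    exact prod_mono_left Ico_subset_Icc_self

lemma hasDerivAt_flux (h : IsPeriodicOHSolution γ (Ico 0 T) u) (ht : t ∈ Ico 0 T) (x : ℝ) :
    HasDerivAt (fun y => deriv (fun s => u s y) t + u t y * deriv (u t) y) (γ * u t x) x := by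
  refine ((h.diff_tx t ht x).hasDerivAt.add
    ((h.diff_x t ht x).hasDerivAt.mul (h.diff_xx t ht x).hasDerivAt)).congr_deriv ?_
  rw [← h.eqn_Ico ht x]
  ring

lemma exists_eq_zero (h : IsPeriodicOHSolution γ (Ico 0 T) u) (hγ : γ ≠ 0) (ht : t ∈ Ico 0 T) :
    ∃ z, u t z = 0 := by
  have hflux : Function.Periodic (fun y => deriv (fun s => u s y) t + u t y * deriv (u t) y) 1 :=
    (h.periodic_deriv_t ht (uniqueDiffOn_Ico 0 T t ht)).add
      (Function.Periodic.mul (h.periodic t ht) (h.periodic_deriv_x ht))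
  obtain ⟨z, -, hz⟩ := exists_hasDerivAt_eq_zero zero_lt_one
    (fun x _ => (h.hasDerivAt_flux ht x).continuousAt.continuousWithinAt)
    (by simpa using (hflux 0).symm) (fun x _ => h.hasDerivAt_flux ht x)
  exact ⟨z, (mul_eq_zero.1 hz).resolve_left hγ⟩

lemma mul_le_of_le_deriv (h : IsPeriodicOHSolution γ (Ico 0 T) u) (ht : t ∈ Ico 0 T) {m : ℝ}
    (hm : ∀ x, m ≤ deriv (u t) x) (x : ℝ) : γ * u t x ≤ -|γ| * m := by
  obtain rfl | hγ := eq_or_ne γ 0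
  · simp
  obtain ⟨z, hz⟩ := h.exists_eq_zero hγ ht
  have hu : |u t x| ≤ -m := by
    simpa [hz] using
      abs_sub_le_of_periodic_of_le_deriv one_pos (h.diff_x t ht) (h.periodic t ht) hm x z
  calc γ * u t x ≤ |γ| * |u t x| := (le_abs_self _).trans_eq (abs_mul _ _)
    _ ≤ |γ| * -m := by gcongr
    _ = -|γ| * m := by ring

lemma eventually_slope_deriv_x_lt (h : IsPeriodicOHSolution γ (Ico 0 T) u) (ht : t ∈ Ico 0 T)
    {x r : ℝ} (hr : deriv (fun y => deriv (fun s => u s y) t) x < r) :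
    ∀ᶠ z in 𝓝[>] t, slope (fun s => deriv (u s) x) t z < r := by
  obtain ⟨C, hC, hCr⟩ := exists_between hr
  have hnear : ∀ᶠ p : ℝ × ℝ in 𝓝[>] t ×ˢ 𝓝[>] x,
      deriv (fun y => deriv (fun s => u s y) p.1) p.2 < C := by
    refine ((h.cont_utx (t, x) ⟨ht, mem_univ x⟩).eventually_lt_const hC).filter_mono ?_
    rw [nhdsWithin_prod_eq]
    refine prod_mono ?_ (nhdsWithin_mono x (subset_univ _))
    rw [← nhdsWithin_Ioo_eq_nhdsGT ht.2]
    exact nhdsWithin_mono t fun s hs => ⟨ht.1.trans hs.1.le, hs.2⟩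
  obtain ⟨⟨b, y⟩, ⟨htb, hxy⟩, hle⟩ :=
    ((nhdsGT_basis t).prod (nhdsGT_basis x)).eventually_iff.1 hnear
  filter_upwards [Ioo_mem_nhdsGT htb, Ioo_mem_nhdsGT ht.2] with z ⟨htz, hzb⟩ ⟨_, hzT⟩
  have hsub : Icc t z ⊆ Ico 0 T := fun s hs => ⟨ht.1.trans hs.1, hs.2.trans_lt hzT⟩
  have hincr : deriv (u z) x - deriv (u t) x ≤ C * (z - t) :=
    deriv_sub_deriv_le_of_mixed_deriv_le htz.le hxy (h.diff_x t ht x)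
      (h.diff_x z (hsub (right_mem_Icc.2 htz.le)) x) (fun s hs ξ _ => h.diff_t s (hsub hs) ξ)
      (fun s hs ξ _ => h.diff_tx s (hsub (Ioo_subset_Icc_self hs)) ξ)
      (fun s hs ξ hξ => (hle (x := (s, ξ)) ⟨⟨hs.1, hs.2.trans hzb⟩, hξ⟩).le)
  rw [slope_def_field]
  exact ((div_le_iff₀ (sub_pos.2 htz)).2 hincr).trans_lt hCr

lemma exists_isLeast_deriv_x (h : IsPeriodicOHSolution γ S u) (ht : t ∈ S) :
    ∃ x, IsLeast (range (deriv (u t))) (deriv (u t) x) :=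
  exists_isLeast_range_of_periodic (h.continuous_deriv_x ht) one_ne_zero (h.periodic_deriv_x ht)

lemma iInf_deriv_x_le (h : IsPeriodicOHSolution γ S u) (ht : t ∈ S) (x : ℝ) :
    ⨅ y, deriv (u t) y ≤ deriv (u t) x :=
  have ⟨_, hleast⟩ := h.exists_isLeast_deriv_x ht
  ciInf_le hleast.bddBelow x

lemma eventually_slope_iInf_deriv_x_lt (h : IsPeriodicOHSolution γ (Ico 0 T) u)
    (ht : t ∈ Ico 0 T) {r : ℝ}
    (hr : -|γ| * (⨅ x, deriv (u t) x) - (⨅ x, deriv (u t) x) ^ 2 < r) :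
    ∀ᶠ z in 𝓝[>] t, slope (fun s => ⨅ x, deriv (u s) x) t z < r := by
  obtain ⟨x, hleast⟩ := h.exists_isLeast_deriv_x ht
  have hinf : ⨅ y, deriv (u t) y = deriv (u t) x := hleast.csInf_eq
  have hmin : ∀ y, deriv (u t) x ≤ deriv (u t) y := fun y => hleast.2 (mem_range_self y)
  have hxx : deriv (deriv (u t)) x = 0 := IsLocalMin.deriv_eq_zero (.of_forall hmin)
  have heqn := h.eqn_Ico ht x
  rw [hxx, mul_zero, add_zero] at heqn
  have hutx : deriv (fun y => deriv (fun s => u s y) t) x < r := by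
    rw [hinf] at hr
    linarith [h.mul_le_of_le_deriv ht hmin x]
  filter_upwards [h.eventually_slope_deriv_x_lt ht hutx, Ioo_mem_nhdsGT ht.2]
    with z hz ⟨htz, hzT⟩
  refine lt_of_le_of_lt ?_ hz
  rw [slope_def_field, slope_def_field, hinf]
  exact div_le_div_of_nonneg_right
    (sub_le_sub_right (h.iInf_deriv_x_le ⟨ht.1.trans htz.le, hzT⟩ x) _) (sub_pos.2 htz).le

theorem lifespan_le (h : IsPeriodicOHSolution γ (Ico 0 T) u) {x₀ : ℝ}
    (hx₀ : deriv (u 0) x₀ < -(2 * |γ|)) : T ≤ 2 / -deriv (u 0) x₀ := by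
  have hneg : deriv (u 0) x₀ < 0 := by linarith [abs_nonneg γ]
  obtain hT | hT := le_or_gt T 0
  · exact hT.trans (div_nonneg two_pos.le (neg_nonneg.2 hneg.le))
  · exact lifespan_le_of_riccati (abs_nonneg γ)
      (continuousOn_iInf_of_periodic one_pos (fun t ht => h.periodic_deriv_x ht) h.cont_ux)
      (fun t ht r hr => (h.eventually_slope_iInf_deriv_x_lt ht hr).frequently)
      (h.iInf_deriv_x_le ⟨le_rfl, hT⟩ x₀) hx₀

end IsPeriodicOHSolution

theorem wave_breaking_scaled_inf_sup_general (γ : ℝ) {u₀ : ℝ → ℝ} {a : ℝ} (ha : deriv u₀ a < 0) :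
    ∃ N : ℕ, ∀ n : ℕ, N ≤ n → ∀ (T : ℝ) (u : ℝ → ℝ → ℝ),
      IsPeriodicOHSolution γ (Ico 0 T) u → (∀ x : ℝ, u 0 x = u₀ ((n : ℝ) * x)) →
      T ≤ 2 / ((n : ℝ) * -deriv u₀ a) := by
  obtain ⟨N, hN⟩ := exists_nat_gt (2 * |γ| / -deriv u₀ a)
  refine ⟨N, fun n hn T u h hu₀ => ?_⟩
  have hNn : 2 * |γ| / -deriv u₀ a < n := hN.trans_le (Nat.cast_le.2 hn)
  have hn₀ : (n : ℝ) ≠ 0 :=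
    ((div_nonneg (by positivity) (neg_nonneg.2 ha.le)).trans_lt hNn).ne'
  have hslope : deriv (u 0) (a / n) = n * deriv u₀ a := by
    rw [funext hu₀, deriv_comp_mul_left, mul_div_cancel₀ a hn₀, smul_eq_mul]
  rw [div_lt_iff₀ (neg_pos.2 ha)] at hNn
  rw [mul_neg, ← hslope]
  exact h.lifespan_le (by linarith)

/-- if `|inf u₀'| ≥ |sup u₀'| > 0` for a mean-zero `u₀`, then for all
large `n` the initial data `x ↦ u₀(nx)` leads to finite-time wave breaking: no
periodic classical solution with this data and `u_x` bounded from below is global. -/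
theorem wave_breaking_scaled_inf_sup
    (γ : ℝ) (hγ : 0 < γ) (u₀ : ℝ → ℝ) (hreg : ContDiff ℝ 2 u₀)
    (hper : ∀ x : ℝ, u₀ (x + 1) = u₀ x)
    (hmean : (∫ x in (0:ℝ)..1, u₀ x) = 0)
    (hinfsup : |⨅ x : ℝ, deriv u₀ x| ≥ |⨆ x : ℝ, deriv u₀ x|)
    (hsuppos : 0 < |⨆ x : ℝ, deriv u₀ x|) :
    ∃ N : ℕ, ∀ n : ℕ, N ≤ n →
      ∀ u : ℝ → ℝ → ℝ,
        IsPeriodicOHSolution γ (Set.Ici 0) u →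
        (∀ x : ℝ, u 0 x = u₀ ((n : ℝ) * x)) →
        ¬ ∃ c : ℝ, ∀ t ∈ Set.Ici (0 : ℝ), ∀ x : ℝ, c ≤ deriv (u t) x := by
  obtain ⟨a, ha⟩ := exists_deriv_neg_of_periodic one_pos (hreg.differentiable two_ne_zero) hper
    (by by_contra! h; simp [h] at hsuppos)
  obtain ⟨N, hN⟩ := wave_breaking_scaled_inf_sup_general γ ha
  exact ⟨N, fun n hn u hu hu₀ _ =>
    (lt_add_one _).not_ge (hN n hn _ u (hu.mono Ico_subset_Ici_self) hu₀)⟩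
end

section
/- Let γ > 0, let T ∈ (0,∞), and let u be a periodic classical solution of the Ostrovsky–Hunter equation on [0,T) with initial data u₀ satisfying ∫₀¹ u₀(x) dx = 0, which is in addition three times continuously differentiable in x, and suppose that lim_{t↑T} inf_{x∈ℝ} u_x(t,x) = −∞. Then lim_{t↑T} ( (T−t) · sup_{x∈ℝ} u_x(t,x) ) = 0; in fact, 0 ≤ sup_{x∈ℝ} u_x(t,x) ≤ sup_{x∈ℝ} u₀'(x) + γ ( T ‖u₀‖_{L∞} + (γ T²/2) ‖u₀‖_{L²} ) for all t ∈ [0,T). -/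
open MeasureTheory Filter Set intervalIntegral

/-!
Along characteristics `u_x` satisfies the Riccati equation `(u_x)˙ = γ u - u_x²`, so the supremum
of `u_x` grows at rate at most `|γ| sup |u|`. To bound `u` itself, let `g = u_t + u u_x` be the
material derivative, so that `g_x = γ u`. Then `u` and `g` have mean zero, and `2 u u_t` is the
`x`-derivative of `g² / γ - 2 u³ / 3`, whence `‖u‖_{L²}` is conserved. A function of mean zero is
bounded by the `L¹` norm of its derivative, so `|g| ≤ |γ| ‖u₀‖_{L²}`, and a maximum principle gives
`|u| ≤ ‖u₀‖_{L∞} + |γ| ‖u₀‖_{L²} t`. A second maximum principle bounds `sup u_x` on `[0, T)`.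
-/

open Function Topology

section Calculus

variable {𝕜 E : Type*} [RCLike 𝕜] [NormedAddCommGroup E] [NormedSpace 𝕜 E]

lemma periodic_deriv {f : 𝕜 → E} {c : 𝕜} (hf : Periodic f c) : Periodic (deriv f) c := fun x => by
  rw [← deriv_comp_add_const, funext hf]

-- Peano's form of Schwarz's theorem: comparing `f` with the bilinear `(t, x) ↦ t x • ftx t₀ x₀`
-- reduces it to two applications of the mean value inequality.
theorem hasDerivAt_of_mixed_partial {f ft ftx : 𝕜 → 𝕜 → E} {fx : 𝕜 → E} {t₀ x₀ : 𝕜}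
    (hft : ∀ᶠ p in 𝓝 (t₀, x₀), HasDerivAt (fun s => f s p.2) (ft p.1 p.2) p.1)
    (hfx : ∀ᶠ t in 𝓝 t₀, HasDerivAt (f t) (fx t) x₀)
    (hftx : ∀ᶠ p in 𝓝 (t₀, x₀), HasDerivAt (ft p.1) (ftx p.1 p.2) p.2)
    (hcont : ContinuousAt (uncurry ftx) (t₀, x₀)) :
    HasDerivAt fx (ftx t₀ x₀) t₀ := by
  rw [hasDerivAt_iff_isLittleO, Asymptotics.isLittleO_iff]
  intro ε hε
  set c := ftx t₀ x₀
  have hclose : ∀ᶠ p : 𝕜 × 𝕜 in 𝓝 (t₀, x₀), ‖ftx p.1 p.2 - c‖ ≤ ε := by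
    filter_upwards [Metric.tendsto_nhds.1 hcont ε hε] with p hp
    exact (dist_eq_norm (ftx p.1 p.2) c ▸ hp).le
  obtain ⟨δ, hδ, hball⟩ := Metric.eventually_nhds_iff_ball.1 (hft.and (hftx.and hclose))
  replace hball : ∀ s ∈ Metric.ball t₀ δ, ∀ y ∈ Metric.ball x₀ δ, _ := fun s hs y hy =>
    hball (s, y) (ball_prod_same t₀ x₀ δ ▸ ⟨hs, hy⟩)
  have ht₀ := Metric.mem_ball_self (x := t₀) hδ
  have hx₀ := Metric.mem_ball_self (x := x₀) hδ
  have increment_ft : ∀ s ∈ Metric.ball t₀ δ, ∀ y ∈ Metric.ball x₀ δ,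
      ‖(ft s y - y • c) - (ft s x₀ - x₀ • c)‖ ≤ ε * ‖y - x₀‖ := fun s hs y hy =>
    (convex_ball x₀ δ).norm_image_sub_le_of_norm_hasDerivWithin_le
      (f := fun z => ft s z - z • c) (f' := fun z => ftx s z - (1 : 𝕜) • c)
      (fun z hz => ((hball s hs z hz).2.1.sub ((hasDerivAt_id z).smul_const c)).hasDerivWithinAt)
      (fun z hz => by simpa only [one_smul] using (hball s hs z hz).2.2) hx₀ hy
  filter_upwards [hfx, Metric.ball_mem_nhds t₀ hδ] with t hfxt ht
  have increment_f : ∀ y ∈ Metric.ball x₀ δ,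
      ‖(f t y - f t₀ y - (t - t₀) • y • c) - (f t x₀ - f t₀ x₀ - (t - t₀) • x₀ • c)‖
        ≤ ε * ‖t - t₀‖ * ‖y - x₀‖ := fun y hy => by
    have := (convex_ball t₀ δ).norm_image_sub_le_of_norm_hasDerivWithin_le
      (f := fun s => f s y - f s x₀ - s • (y - x₀) • c)
      (f' := fun s => ft s y - ft s x₀ - (1 : 𝕜) • (y - x₀) • c)
      (fun s hs => (((hball s hs y hy).1.sub (hball s hs x₀ hx₀).1).sub
        ((hasDerivAt_id s).smul_const ((y - x₀) • c))).hasDerivWithinAt)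
      (fun s hs => by
        convert increment_ft s hs y hy using 2
        module) ht₀ ht
    convert this using 1
    · congr 1
      module
    · ring
  have := ((hfxt.sub hfx.self_of_nhds).sub
    (((hasDerivAt_id x₀).smul_const c).const_smul (t - t₀))).le_of_lip' (by positivity)
    (Filter.mem_of_superset (Metric.ball_mem_nhds x₀ hδ) increment_f)
  simpa only [one_smul] using this

theorem hasDerivAt_intervalIntegral_of_continuousOn [NormedSpace ℝ E] {f f' : 𝕜 → ℝ → E}
    {U : Set 𝕜} {a b : ℝ} {t₀ : 𝕜} (hU : U ∈ 𝓝 t₀)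
    (hf : ContinuousOn (uncurry f) (U ×ˢ uIcc a b))
    (hf' : ContinuousOn (uncurry f') (U ×ˢ uIcc a b))
    (hderiv : ∀ t ∈ U, ∀ x ∈ uIcc a b, HasDerivAt (fun s => f s x) (f' t x) t) :
    HasDerivAt (fun t => ∫ x in a..b, f t x) (∫ x in a..b, f' t₀ x) t₀ := by
  obtain ⟨ε, hε, hball⟩ := Metric.nhds_basis_closedBall.mem_iff.1 hU
  obtain ⟨C, hC⟩ := ((isCompact_closedBall t₀ ε).prod isCompact_uIcc).exists_bound_of_continuousOn
    (hf'.mono (prod_mono_left hball))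
  have slice_measurable : ∀ {h : 𝕜 → ℝ → E}, ContinuousOn (uncurry h) (U ×ˢ uIcc a b) →
      ∀ t ∈ U, AEStronglyMeasurable (h t) (volume.restrict (uIoc a b)) := fun hh t ht =>
    ((hh.uncurry_left t ht).mono uIoc_subset_uIcc).aestronglyMeasurable measurableSet_uIoc
  exact (hasDerivAt_integral_of_dominated_loc_of_deriv_le (bound := fun _ => C)
    (Metric.closedBall_mem_nhds t₀ hε)
    (Filter.mem_of_superset hU (slice_measurable hf))
    (hf.uncurry_left t₀ (mem_of_mem_nhds hU)).intervalIntegrable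
    (slice_measurable hf' t₀ (mem_of_mem_nhds hU))
    (ae_of_all _ fun x hx t ht => hC (t, x) ⟨ht, uIoc_subset_uIcc hx⟩)
    intervalIntegrable_const
    (ae_of_all _ fun x hx t ht => hderiv t (hball ht) x (uIoc_subset_uIcc hx))).2

end Calculus

section Integrals

variable {E : Type*} [NormedAddCommGroup E] [NormedSpace ℝ E]

lemma continuousOn_parametric_intervalIntegral {X : Type*} [TopologicalSpace X]
    [FirstCountableTopology X] {S : Set X} {f : X → ℝ → E}
    (hf : ContinuousOn (uncurry f) (S ×ˢ univ)) (a b : ℝ) :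
    ContinuousOn (fun t => ∫ x in a..b, f t x) S := by
  rw [continuousOn_iff_continuous_domRestrict]
  refine continuous_parametric_intervalIntegral_of_continuous' (f := fun t : S => f t) ?_ a b
  exact hf.comp_continuous (f := Prod.map Subtype.val id) (by fun_prop)
    fun p => ⟨p.1.2, mem_univ p.2⟩

lemma intervalIntegral_eq_zero_of_periodic [CompleteSpace E] {F f : ℝ → E} {c : ℝ}
    (hF : Periodic F c) (hderiv : ∀ x, HasDerivAt F (f x) x)
    (hint : IntervalIntegrable f volume 0 c) : ∫ x in (0 : ℝ)..c, f x = 0 := by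
  rw [integral_eq_sub_of_hasDerivAt (fun x _ => hderiv x) hint, hF.eq, sub_self]

lemma abs_le_integral_abs_of_integral_eq_zero {g g' : ℝ → ℝ} {a b x : ℝ} (hab : a < b)
    (hderiv : ∀ y ∈ Icc a b, HasDerivAt g (g' y) y) (hint : IntervalIntegrable g' volume a b)
    (hmean : ∫ y in a..b, g y = 0) (hx : x ∈ Icc a b) : |g x| ≤ ∫ y in a..b, |g' y| := by
  have hcont : ContinuousOn g (uIcc a b) := fun y hy =>
    (hderiv y (uIcc_of_le hab.le ▸ hy)).continuousAt.continuousWithinAt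
  obtain ⟨c, hc, hgc⟩ := exists_eq_interval_average hab.ne hcont
  rw [interval_average_eq, hmean, smul_zero] at hgc
  replace hc : c ∈ Icc a b := uIcc_of_le hab.le ▸ uIoo_subset_uIcc_self hc
  have hsub : uIcc c x ⊆ Icc a b := ordConnected_Icc.uIcc_subset hc hx
  calc |g x| = |∫ y in c..x, g' y| := by
        rw [integral_eq_sub_of_hasDerivAt (fun y hy => hderiv y (hsub hy))
          (hint.mono_set (uIcc_of_le hab.le ▸ hsub)), hgc, sub_zero]
    _ ≤ ∫ y in uIoc c x, |g' y| := by
        simpa only [Real.norm_eq_abs] using norm_integral_le_integral_norm_uIoc (f := g')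
    _ ≤ ∫ y in Ioc a b, |g' y| :=
        setIntegral_mono_set hint.abs.1 (ae_of_all _ fun _ => abs_nonneg _)
          (Ioc_subset_Ioc (le_inf hc.1 hx.1) (sup_le hc.2 hx.2)).eventuallyLE
    _ = ∫ y in a..b, |g' y| := (integral_of_le hab.le).symm

lemma integral_abs_le_sqrt_mul_sqrt_integral_sq {Ω : Type*} [MeasurableSpace Ω] {μ : Measure Ω}
    [IsFiniteMeasure μ] {f : Ω → ℝ} (hf : MemLp f 2 μ) :
    ∫ ω, |f ω| ∂μ ≤ √(μ.real univ) * √(∫ ω, f ω ^ 2 ∂μ) := by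
  have hf' : MemLp f (ENNReal.ofReal 2) μ := by simpa using hf
  have holder := integral_mul_norm_le_Lp_mul_Lq Real.HolderConjugate.two_two
    (memLp_const (1 : ℝ)) hf'
  simpa [Real.sqrt_eq_rpow] using holder

lemma intervalIntegral_abs_le_sqrt_mul_sqrt_intervalIntegral_sq {f : ℝ → ℝ} {a b : ℝ} (hab : a ≤ b)
    (hf : ContinuousOn f (Icc a b)) :
    ∫ x in a..b, |f x| ≤ √(b - a) * √(∫ x in a..b, f x ^ 2) := by
  have hmem : MemLp f 2 (volume.restrict (Ioc a b)) := by
    refine (memLp_two_iff_integrable_sq ?_).2 ?_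
    · exact (hf.mono Ioc_subset_Icc_self).aestronglyMeasurable measurableSet_Ioc
    · exact (hf.pow 2).integrableOn_Icc.mono_set Ioc_subset_Icc_self
  simpa [integral_of_le hab, hab] using integral_abs_le_sqrt_mul_sqrt_integral_sq hmem

end Integrals

section MaximumPrinciple

lemma nonneg_of_hasDerivWithinAt_of_isMaxOn {f : ℝ → ℝ} {f' a b : ℝ} (hab : a < b)
    (hf : HasDerivWithinAt f f' (Icc a b) b) (hmax : IsMaxOn f (Icc a b) b) : 0 ≤ f' := by
  have hcone : a - b ∈ posTangentConeAt (Icc a b) b :=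
    sub_mem_posTangentConeAt_of_segment_subset (by rw [segment_symm, segment_eq_Icc hab.le])
  have hle : (a - b) * f' ≤ 0 := hmax.localize.hasFDerivWithinAt_nonpos hf.hasFDerivWithinAt hcone
  exact nonneg_of_mul_nonpos_right hle (sub_neg.2 hab)

variable {a b : ℝ} {φ φ' : ℝ → ℝ}

-- Subtracting `ε (t - a)` makes the inequality between the derivatives strict, which is
-- incompatible with a positive maximum of `f - φ - ε (t - a)` at a time later than `a`.
theorem le_of_deriv_le_at_max {X : Type*} [TopologicalSpace X] {K : Set X} (hK : IsCompact K)
    {f f' : ℝ → X → ℝ} (hf : ContinuousOn (uncurry f) (Icc a b ×ˢ K))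
    (hf' : ∀ t ∈ Ioc a b, ∀ x ∈ K, HasDerivWithinAt (fun s => f s x) (f' t x) (Icc a t) t)
    (hφ : ContinuousOn φ (Icc a b))
    (hφ' : ∀ t ∈ Ioc a b, HasDerivWithinAt φ (φ' t) (Icc a t) t)
    (hinit : ∀ x ∈ K, f a x ≤ φ a)
    (hmax : ∀ t ∈ Ioc a b, ∀ x ∈ K, IsMaxOn (f t) K x → f' t x ≤ φ' t)
    {t : ℝ} (ht : t ∈ Icc a b) {x : X} (hx : x ∈ K) : f t x ≤ φ t := by
  by_contra! hlt
  obtain ⟨ε, hε, hεt⟩ := exists_pos_mul_lt (sub_pos.2 hlt) (t - a)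
  obtain ⟨⟨s, z⟩, ⟨hs, hz⟩, hsz⟩ := (isCompact_Icc.prod hK).exists_isMaxOn ⟨(t, x), ht, hx⟩
    (f := fun p : ℝ × X => f p.1 p.2 - φ p.1 - ε * (p.1 - a))
    ((hf.sub (hφ.comp continuousOn_fst fun p hp => hp.1)).sub (by fun_prop))
  replace hsz : ∀ r ∈ Icc a b, ∀ y ∈ K,
      f r y - φ r - ε * (r - a) ≤ f s z - φ s - ε * (s - a) := fun r hr y hy =>
    hsz (show (r, y) ∈ Icc a b ×ˢ K from ⟨hr, hy⟩)
  have has : a < s := by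
    refine hs.1.lt_of_ne fun h => ?_
    subst h
    linarith [hsz t ht x hx, hinit z hz]
  have hs' : s ∈ Ioc a b := ⟨has, hs.2⟩
  have hgrow : 0 ≤ f' s z - φ' s - ε * 1 :=
    nonneg_of_hasDerivWithinAt_of_isMaxOn has
      (((hf' s hs' z hz).sub (hφ' s hs')).sub
        (((hasDerivWithinAt_id s _).sub_const a).const_mul ε))
      fun r hr => hsz r ⟨hr.1, hr.2.trans hs.2⟩ z hz
  have hspatial : IsMaxOn (f s) K z := fun y hy => show f s y ≤ f s z by linarith [hsz s hs y hy]
  linarith [hmax s hs' z hz hspatial]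

section Periodic

variable {c : ℝ} {f f' : ℝ → ℝ → ℝ}

theorem le_of_periodic_of_deriv_le_at_max (hc : 0 < c) (hper : ∀ t ∈ Icc a b, Periodic (f t) c)
    (hf : ContinuousOn (uncurry f) (Icc a b ×ˢ univ))
    (hf' : ∀ t ∈ Ioc a b, ∀ x, HasDerivWithinAt (fun s => f s x) (f' t x) (Icc a t) t)
    (hφ : ContinuousOn φ (Icc a b))
    (hφ' : ∀ t ∈ Ioc a b, HasDerivWithinAt φ (φ' t) (Icc a t) t)
    (hinit : ∀ x, f a x ≤ φ a)
    (hmax : ∀ t ∈ Ioc a b, ∀ x, IsMaxOn (f t) univ x → f' t x ≤ φ' t)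
    {t : ℝ} (ht : t ∈ Icc a b) (x : ℝ) : f t x ≤ φ t := by
  obtain ⟨y, hy, hxy⟩ := (hper t ht).exists_mem_Ico₀ hc x
  rw [hxy]
  refine le_of_deriv_le_at_max (isCompact_Icc (a := 0) (b := c))
    (hf.mono (prod_mono_right (subset_univ _))) (fun s hs z _ => hf' s hs z) hφ hφ'
    (fun z _ => hinit z) (fun s hs z _ hz => hmax s hs z fun w _ => ?_) ht (Ico_subset_Icc_self hy)
  obtain ⟨w', hw', hww'⟩ := (hper s (Ioc_subset_Icc_self hs)).exists_mem_Ico₀ hc w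
  exact hww'.trans_le (hz (Ico_subset_Icc_self hw'))

theorem abs_le_of_periodic_of_abs_deriv_le_at_extr (hc : 0 < c)
    (hper : ∀ t ∈ Icc a b, Periodic (f t) c)
    (hf : ContinuousOn (uncurry f) (Icc a b ×ˢ univ))
    (hf' : ∀ t ∈ Ioc a b, ∀ x, HasDerivWithinAt (fun s => f s x) (f' t x) (Icc a t) t)
    (hφ : ContinuousOn φ (Icc a b))
    (hφ' : ∀ t ∈ Ioc a b, HasDerivWithinAt φ (φ' t) (Icc a t) t)
    (hinit : ∀ x, |f a x| ≤ φ a)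
    (hextr : ∀ t ∈ Ioc a b, ∀ x, IsExtrOn (f t) univ x → |f' t x| ≤ φ' t)
    {t : ℝ} (ht : t ∈ Icc a b) (x : ℝ) : |f t x| ≤ φ t := by
  refine abs_le'.2 ⟨?_, ?_⟩
  · exact le_of_periodic_of_deriv_le_at_max hc hper hf hf' hφ hφ'
      (fun y => (le_abs_self _).trans (hinit y))
      (fun s hs y hy => (le_abs_self _).trans (hextr s hs y (.inr hy))) ht x
  · exact le_of_periodic_of_deriv_le_at_max (f := fun t x => -f t x) (f' := fun t x => -f' t x)
      hc (fun s hs y => congrArg Neg.neg (hper s hs y)) hf.neg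
      (fun s hs y => (hf' s hs y).neg) hφ hφ'
      (fun y => (neg_le_abs _).trans (hinit y))
      (fun s hs y hy => (neg_le_abs _).trans (hextr s hs y
        (.inl fun z hz => show f s y ≤ f s z from neg_le_neg_iff.1 (hy hz)))) ht x

end Periodic

end MaximumPrinciple

lemma iSup_deriv_nonneg_of_periodic {f : ℝ → ℝ} {c : ℝ} (hc : 0 < c) (hper : Periodic f c)
    (hf : Continuous f) (hbdd : BddAbove (range (deriv f))) : 0 ≤ ⨆ x, deriv f x := by
  obtain ⟨x, -, hx⟩ := exists_deriv_eq_zero hc hf.continuousOn hper.eq.symm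
  exact hx ▸ le_ciSup hbdd x

/-- The material derivative `u_t + u u_x` of a velocity field `u`, in terms of which the
Ostrovsky–Hunter equation reads `(materialDeriv u t)_x = γ u`. -/
noncomputable def materialDeriv (u : ℝ → ℝ → ℝ) (t x : ℝ) : ℝ :=
  deriv (fun s => u s x) t + u t x * deriv (u t) x

namespace IsPeriodicOHSolution

variable {γ t T : ℝ} {S : Set ℝ} {u : ℝ → ℝ → ℝ}

section Slices

lemma continuous (hu : IsPeriodicOHSolution γ S u) (ht : t ∈ S) : Continuous (u t) :=
  continuousOn_univ.1 (hu.cont_u.uncurry_left t ht)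

lemma continuous_deriv_time (hu : IsPeriodicOHSolution γ S u) (ht : t ∈ S) :
    Continuous fun x => deriv (fun s => u s x) t :=
  continuousOn_univ.1 (hu.cont_ut.uncurry_left (f := fun t x => deriv (fun s => u s x) t) t ht)

lemma continuous_deriv (hu : IsPeriodicOHSolution γ S u) (ht : t ∈ S) :
    Continuous (deriv (u t)) :=
  continuousOn_univ.1 (hu.cont_ux.uncurry_left (f := fun t => deriv (u t)) t ht)

lemma bddAbove_range_abs (hu : IsPeriodicOHSolution γ S u) (ht : t ∈ S) :
    BddAbove (range fun x => |u t x|) :=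
  (Periodic.isBounded_of_continuous (fun x => by rw [hu.periodic t ht x]) one_ne_zero
    (hu.continuous ht).abs).bddAbove

lemma bddAbove_range_deriv (hu : IsPeriodicOHSolution γ S u) (ht : t ∈ S) :
    BddAbove (range (deriv (u t))) :=
  ((periodic_deriv (hu.periodic t ht)).isBounded_of_continuous one_ne_zero
    (hu.continuous_deriv ht)).bddAbove

lemma hasDerivAt_deriv (hu : IsPeriodicOHSolution γ S u) (hS : S ∈ 𝓝 t) (x : ℝ) :
    HasDerivAt (fun s => deriv (u s) x) (deriv (fun y => deriv (fun s => u s y) t) x) t := by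
  have hnhds : S ×ˢ (univ : Set ℝ) ∈ 𝓝 (t, x) := prod_mem_nhds hS univ_mem
  exact hasDerivAt_of_mixed_partial (f := u) (ft := fun t x => deriv (fun s => u s x) t)
    (ftx := fun t x => deriv (fun y => deriv (fun s => u s y) t) x)
    (Filter.mem_of_superset hnhds fun p hp => (hu.diff_t p.1 hp.1 p.2).hasDerivAt)
    (Filter.mem_of_superset hS fun s hs => (hu.diff_x s hs x).hasDerivAt)
    (Filter.mem_of_superset hnhds fun p hp => (hu.diff_tx p.1 hp.1 p.2).hasDerivAt)
    (hu.cont_utx.continuousAt hnhds)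

end Slices

section Conservation

lemma periodic_materialDeriv (hu : IsPeriodicOHSolution γ S u) (hS : S ∈ 𝓝 t) :
    Periodic (materialDeriv u t) 1 := fun x => by
  have hut : deriv (fun s => u s (x + 1)) t = deriv (fun s => u s x) t :=
    EventuallyEq.deriv_eq (Filter.mem_of_superset hS fun s hs => hu.periodic s hs x)
  have ht := mem_of_mem_nhds hS
  simp only [materialDeriv, hut, hu.periodic t ht x, periodic_deriv (hu.periodic t ht) x]

lemma hasDerivAt_materialDeriv (hu : IsPeriodicOHSolution γ S u) (ht : t ∈ S) (ht₀ : 0 < t)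
    (x : ℝ) : HasDerivAt (materialDeriv u t) (γ * u t x) x := by
  refine ((hu.diff_tx t ht x).hasDerivAt.add
    ((hu.diff_x t ht x).hasDerivAt.mul (hu.diff_xx t ht x).hasDerivAt)).congr_deriv ?_
  rw [← hu.eqn t ht ht₀ x]
  ring

lemma integral_eq_zero (hu : IsPeriodicOHSolution γ S u) (hγ : γ ≠ 0) (hS : S ∈ 𝓝 t)
    (ht₀ : 0 < t) : ∫ x in (0 : ℝ)..1, u t x = 0 := by
  have ht := mem_of_mem_nhds hS
  have hint := intervalIntegral_eq_zero_of_periodic (hu.periodic_materialDeriv hS)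
    (hu.hasDerivAt_materialDeriv ht ht₀)
    (((hu.continuous ht).const_mul γ).intervalIntegrable _ _)
  rw [intervalIntegral.integral_const_mul] at hint
  exact (mul_eq_zero.1 hint).resolve_left hγ

lemma integral_deriv_time_eq_zero (hu : IsPeriodicOHSolution γ S u) (hγ : γ ≠ 0) (hS : S ∈ 𝓝 t)
    (ht₀ : 0 < t) : ∫ x in (0 : ℝ)..1, deriv (fun s => u s x) t = 0 := by
  have hsub : S ×ˢ uIcc (0 : ℝ) 1 ⊆ S ×ˢ univ := prod_mono_right (subset_univ _)
  have hmean : HasDerivAt (fun s => ∫ x in (0 : ℝ)..1, u s x)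
      (∫ x in (0 : ℝ)..1, deriv (fun s => u s x) t) t :=
    hasDerivAt_intervalIntegral_of_continuousOn (f' := fun t x => deriv (fun s => u s x) t) hS
      (hu.cont_u.mono hsub) (hu.cont_ut.mono hsub) fun s hs x _ => (hu.diff_t s hs x).hasDerivAt
  refine hmean.unique ((hasDerivAt_const t 0).congr_of_eventuallyEq ?_)
  filter_upwards [eventually_mem_nhds_iff.2 hS, Ioi_mem_nhds ht₀] with s hs hs₀
  exact hu.integral_eq_zero hγ hs hs₀

lemma integral_materialDeriv_eq_zero (hu : IsPeriodicOHSolution γ S u) (hγ : γ ≠ 0)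
    (hS : S ∈ 𝓝 t) (ht₀ : 0 < t) : ∫ x in (0 : ℝ)..1, materialDeriv u t x = 0 := by
  have ht := mem_of_mem_nhds hS
  have hadv : IntervalIntegrable (fun x => u t x * deriv (u t) x) volume 0 1 :=
    ((hu.continuous ht).mul (hu.continuous_deriv ht)).intervalIntegrable _ _
  have hadv_zero : ∫ x in (0 : ℝ)..1, u t x * deriv (u t) x = 0 :=
    intervalIntegral_eq_zero_of_periodic (F := fun x => u t x ^ 2 / 2)
      (fun x => by simp only [hu.periodic t ht x])
      (fun x => (((hu.diff_x t ht x).hasDerivAt.fun_pow 2).div_const 2).congr_deriv (by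
        push_cast
        ring)) hadv
  simp only [materialDeriv]
  rw [integral_add ((hu.continuous_deriv_time ht).intervalIntegrable _ _) hadv,
    hu.integral_deriv_time_eq_zero hγ hS ht₀, hadv_zero, add_zero]

-- `2 u u_t = 2 u g - 2 u² u_x` with `g = u_t + u u_x`, and `u = g_x / γ` makes both terms exact.
lemma integral_mul_deriv_time_eq_zero (hu : IsPeriodicOHSolution γ S u) (hγ : γ ≠ 0)
    (hS : S ∈ 𝓝 t) (ht₀ : 0 < t) :
    ∫ x in (0 : ℝ)..1, 2 * u t x * deriv (fun s => u s x) t = 0 := by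
  have ht := mem_of_mem_nhds hS
  refine intervalIntegral_eq_zero_of_periodic
    (F := fun x => materialDeriv u t x ^ 2 / γ - 2 / 3 * u t x ^ 3)
    (fun x => by simp only [hu.periodic_materialDeriv hS x, hu.periodic t ht x]) (fun x => ?_)
    ((((hu.continuous ht).const_mul 2).mul (hu.continuous_deriv_time ht)).intervalIntegrable _ _)
  refine ((((hu.hasDerivAt_materialDeriv ht ht₀ x).fun_pow 2).div_const γ).sub
    (((hu.diff_x t ht x).hasDerivAt.fun_pow 3).const_mul (2 / 3))).congr_deriv ?_
  simp only [materialDeriv]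
  field_simp
  push_cast
  ring

lemma integral_sq_eq (hu : IsPeriodicOHSolution γ (Ico 0 T) u) (hγ : γ ≠ 0)
    (ht : t ∈ Ico 0 T) : ∫ x in (0 : ℝ)..1, u t x ^ 2 = ∫ x in (0 : ℝ)..1, u 0 x ^ 2 := by
  obtain rfl | ht₀ := ht.1.eq_or_lt
  · rfl
  have hsub : Ico 0 T ×ˢ uIcc (0 : ℝ) 1 ⊆ Ico 0 T ×ˢ univ := prod_mono_right (subset_univ _)
  have hsq : ContinuousOn (uncurry fun s x => u s x ^ 2) (Ico 0 T ×ˢ univ) := hu.cont_u.pow 2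
  have hcont : ContinuousOn (fun s => ∫ x in (0 : ℝ)..1, u s x ^ 2) (Icc 0 t) :=
    (continuousOn_parametric_intervalIntegral hsq 0 1).mono (Icc_subset_Ico_right ht.2)
  have hderiv : ∀ s ∈ Ioo 0 t, HasDerivAt (fun s => ∫ x in (0 : ℝ)..1, u s x ^ 2) 0 s := by
    intro s hs
    have hS : Ico 0 T ∈ 𝓝 s := Ico_mem_nhds hs.1 (hs.2.trans ht.2)
    exact (hasDerivAt_intervalIntegral_of_continuousOn
      (f' := fun s x => 2 * u s x * deriv (fun r => u r x) s) hS (hsq.mono hsub)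
      (((continuousOn_const (c := (2 : ℝ)).mul hu.cont_u).mul hu.cont_ut).mono hsub)
      fun r hr x _ => by simpa using (hu.diff_t r hr x).hasDerivAt.fun_pow 2).congr_deriv
        (hu.integral_mul_deriv_time_eq_zero hγ hS hs.1)
  obtain ⟨s, -, hslope⟩ := exists_hasDerivAt_eq_slope _ (fun _ => 0) ht₀ hcont hderiv
  rw [eq_comm, div_eq_zero_iff, sub_eq_zero] at hslope
  exact hslope.resolve_right (sub_ne_zero.2 ht₀.ne')

end Conservation

section Bounds

lemma abs_materialDeriv_le (hu : IsPeriodicOHSolution γ S u) (hγ : γ ≠ 0) (hS : S ∈ 𝓝 t)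
    (ht₀ : 0 < t) (x : ℝ) :
    |materialDeriv u t x| ≤ |γ| * √(∫ y in (0 : ℝ)..1, u t y ^ 2) := by
  have ht := mem_of_mem_nhds hS
  obtain ⟨y, hy, hxy⟩ := (hu.periodic_materialDeriv hS).exists_mem_Ico₀ one_pos x
  calc |materialDeriv u t x| = |materialDeriv u t y| := by rw [hxy]
    _ ≤ ∫ z in (0 : ℝ)..1, |γ * u t z| :=
        abs_le_integral_abs_of_integral_eq_zero one_pos
          (fun z _ => hu.hasDerivAt_materialDeriv ht ht₀ z)
          (((hu.continuous ht).const_mul γ).intervalIntegrable _ _)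
          (hu.integral_materialDeriv_eq_zero hγ hS ht₀) (Ico_subset_Icc_self hy)
    _ = |γ| * ∫ z in (0 : ℝ)..1, |u t z| := by
        simp only [abs_mul, intervalIntegral.integral_const_mul]
    _ ≤ |γ| * √(∫ z in (0 : ℝ)..1, u t z ^ 2) := by
        gcongr
        simpa using intervalIntegral_abs_le_sqrt_mul_sqrt_intervalIntegral_sq zero_le_one
          (hu.continuous ht).continuousOn

theorem abs_le (hu : IsPeriodicOHSolution γ (Ico 0 T) u) (hγ : γ ≠ 0) (ht : t ∈ Ico 0 T)
    (x : ℝ) :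
    |u t x| ≤ (⨆ y, |u 0 y|) + |γ| * √(∫ y in (0 : ℝ)..1, u 0 y ^ 2) * t := by
  have hsub : Icc 0 t ⊆ Ico 0 T := Icc_subset_Ico_right ht.2
  have h₀ : (0 : ℝ) ∈ Ico 0 T := hsub (left_mem_Icc.2 ht.1)
  set L := √(∫ y in (0 : ℝ)..1, u 0 y ^ 2) with hL
  refine abs_le_of_periodic_of_abs_deriv_le_at_extr (c := 1) (a := 0) (b := t)
    (f' := fun s y => deriv (fun r => u r y) s)
    (φ := fun s => (⨆ y, |u 0 y|) + |γ| * L * s) (φ' := fun _ => |γ| * L)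
    one_pos (fun s hs => hu.periodic s (hsub hs)) (hu.cont_u.mono (prod_mono_left hsub))
    (fun s hs y => (hu.diff_t s (hsub (Ioc_subset_Icc_self hs)) y).hasDerivAt.hasDerivWithinAt)
    (by fun_prop) (fun s _ => ?_) (fun y => ?_) (fun s hs y hextr => ?_) (right_mem_Icc.2 ht.1) x
  · exact ((hasDerivWithinAt_id s _).const_mul (|γ| * L) |>.const_add _).congr_deriv (mul_one _)
  · simpa only [mul_zero, add_zero] using le_ciSup (hu.bddAbove_range_abs h₀) y
  · have hsT := hsub (Ioc_subset_Icc_self hs)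
    have hux : deriv (u s) y = 0 := (hextr.isLocalExtr univ_mem).deriv_eq_zero
    have hbound := hu.abs_materialDeriv_le hγ (Ico_mem_nhds hs.1 hsT.2) hs.1 y
    rwa [materialDeriv, hux, mul_zero, add_zero, hu.integral_sq_eq hγ hsT, ← hL] at hbound

lemma gamma_mul_le (hu : IsPeriodicOHSolution γ (Ico 0 T) u) (ht : t ∈ Ico 0 T) (x : ℝ) :
    γ * u t x ≤ |γ| * ((⨆ y, |u 0 y|) + |γ| * √(∫ y in (0 : ℝ)..1, u 0 y ^ 2) * t) := by
  obtain rfl | hγ := eq_or_ne γ 0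
  · simp
  · refine (le_abs_self _).trans ?_
    rw [abs_mul]
    exact mul_le_mul_of_nonneg_left (hu.abs_le hγ ht x) (abs_nonneg γ)

theorem deriv_le (hu : IsPeriodicOHSolution γ (Ico 0 T) u) (ht : t ∈ Ico 0 T) (x : ℝ) :
    deriv (u t) x ≤ (⨆ y, deriv (u 0) y) + |γ| * (t * (⨆ y, |u 0 y|)
      + |γ| * t ^ 2 / 2 * √(∫ y in (0 : ℝ)..1, u 0 y ^ 2)) := by
  have hsub : Icc 0 t ⊆ Ico 0 T := Icc_subset_Ico_right ht.2
  have h₀ : (0 : ℝ) ∈ Ico 0 T := hsub (left_mem_Icc.2 ht.1)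
  have hmul := fun s (hs : s ∈ Ico 0 T) => hu.gamma_mul_le hs
  set M := ⨆ y, |u 0 y|
  set L := √(∫ y in (0 : ℝ)..1, u 0 y ^ 2)
  refine le_of_periodic_of_deriv_le_at_max (c := 1) (a := 0) (b := t)
    (f := fun s => deriv (u s)) (f' := fun s y => deriv (fun z => deriv (fun r => u r z) s) y)
    (φ := fun s => (⨆ y, deriv (u 0) y) + |γ| * (s * M + |γ| * s ^ 2 / 2 * L))
    (φ' := fun s => |γ| * (M + |γ| * L * s))
    one_pos (fun s hs => periodic_deriv (hu.periodic s (hsub hs)))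
    (hu.cont_ux.mono (prod_mono_left hsub)) (fun s hs y => ?_) (by fun_prop) (fun s _ => ?_)
    (fun y => ?_) (fun s hs y hmax => ?_) (right_mem_Icc.2 ht.1) x
  · exact (hu.hasDerivAt_deriv
      (Ico_mem_nhds hs.1 (hs.2.trans_lt ht.2)) y).hasDerivWithinAt
  · refine (((((hasDerivAt_id s).mul_const M).add
      (((((hasDerivAt_id s).fun_pow 2).const_mul |γ|).div_const 2).mul_const L)).const_mul
        |γ|).const_add _).hasDerivWithinAt.congr_deriv ?_
    simp only [id_eq]
    push_cast
    ring
  · simpa using le_ciSup (hu.bddAbove_range_deriv h₀) y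
  · have hsT := hsub (Ioc_subset_Icc_self hs)
    have huxx : deriv (deriv (u s)) y = 0 := (hmax.isLocalMax univ_mem).deriv_eq_zero
    have heqn := hu.eqn s hsT hs.1 y
    rw [huxx, mul_zero, add_zero] at heqn
    linarith [sq_nonneg (deriv (u s) y), hmul s hsT y]

theorem iSup_deriv_nonneg (hu : IsPeriodicOHSolution γ S u) (ht : t ∈ S) :
    0 ≤ ⨆ x, deriv (u t) x :=
  iSup_deriv_nonneg_of_periodic one_pos (hu.periodic t ht) (hu.continuous ht)
    (hu.bddAbove_range_deriv ht)

theorem iSup_deriv_le (hu : IsPeriodicOHSolution γ (Ico 0 T) u) (ht : t ∈ Ico 0 T) :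
    (⨆ x, deriv (u t) x) ≤ (⨆ x, deriv (u 0) x) + |γ| * (T * (⨆ y, |u 0 y|)
      + |γ| * T ^ 2 / 2 * √(∫ x in (0 : ℝ)..1, u 0 x ^ 2)) := by
  refine ciSup_le fun x => (hu.deriv_le ht x).trans ?_
  have hM : 0 ≤ ⨆ y, |u 0 y| := Real.iSup_nonneg fun y => abs_nonneg _
  obtain ⟨ht₀, htT⟩ := ht
  gcongr

end Bounds

end IsPeriodicOHSolution

theorem blowup_rate_sup_general {γ T : ℝ} (hT : 0 < T) {u₀ : ℝ → ℝ} {u : ℝ → ℝ → ℝ}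
    (hsol : IsPeriodicOHSolution γ (Ico 0 T) u) (h0 : u 0 = u₀) :
    Tendsto (fun t => (T - t) * ⨆ x, deriv (u t) x) (𝓝[<] T) (𝓝 0) ∧
      ∀ t ∈ Ico 0 T, 0 ≤ (⨆ x, deriv (u t) x) ∧
        (⨆ x, deriv (u t) x) ≤ (⨆ x, deriv u₀ x) + |γ| * (T * (⨆ y, |u₀ y|)
          + |γ| * T ^ 2 / 2 * √(∫ x in (0 : ℝ)..1, u₀ x ^ 2)) := by
  subst h0
  refine ⟨?_, fun t ht => ⟨hsol.iSup_deriv_nonneg ht, hsol.iSup_deriv_le ht⟩⟩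
  have hlim : Tendsto (fun t => T - t) (𝓝[<] T) (𝓝 0) :=
    ((continuous_const.sub continuous_id).tendsto' T 0 (sub_self T)).mono_left nhdsWithin_le_nhds
  exact hlim.zero_mul_isBoundedUnder_le (isBoundedUnder_of_eventually_le
    (Filter.mem_of_superset (Ico_mem_nhdsLT hT) fun t ht =>
      (Real.norm_of_nonneg (hsol.iSup_deriv_nonneg ht)).trans_le (hsol.iSup_deriv_le ht)))

/-- `(T-t)·sup_x u_x(t,x) → 0` as `t ↑ T`; in fact
`0 ≤ sup_x u_x(t,x) ≤ sup u₀' + γ (T ‖u₀‖_{L∞} + (γT²/2) ‖u₀‖_{L²})` on `[0,T)`. -/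
theorem blowup_rate_sup
    (γ T : ℝ) (hγ : 0 < γ) (hT : 0 < T) (u₀ : ℝ → ℝ) (u : ℝ → ℝ → ℝ)
    (hsol : IsPeriodicOHSolution γ (Set.Ico 0 T) u) (h0 : u 0 = u₀)
    (hmean : (∫ x in (0:ℝ)..1, u₀ x) = 0)
    (hC3 : ∀ t ∈ Set.Ico (0 : ℝ) T, ContDiff ℝ 3 (u t))
    (hblow : Filter.Tendsto (fun t => ⨅ x : ℝ, deriv (u t) x)
      (nhdsWithin T (Set.Iio T)) Filter.atBot) :
    Filter.Tendsto (fun t => (T - t) * ⨆ x : ℝ, deriv (u t) x)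
        (nhdsWithin T (Set.Iio T)) (nhds 0) ∧
      ∀ t ∈ Set.Ico (0 : ℝ) T,
        0 ≤ (⨆ x : ℝ, deriv (u t) x) ∧
        (⨆ x : ℝ, deriv (u t) x) ≤ (⨆ x : ℝ, deriv u₀ x)
          + γ * (T * (⨆ y : ℝ, |u₀ y|)
            + γ * T ^ 2 / 2 * Real.sqrt (∫ x in (0:ℝ)..1, (u₀ x) ^ 2)) := by
  simpa only [abs_of_pos hγ] using blowup_rate_sup_general hT hsol h0
end

section
/- Let γ > 0 and let u be a decaying classical solution of the Ostrovsky–Hunter equation on the line on [0,T) with initial data u₀, with antiderivatives v(t,x) = ∫_{−∞}^x u(t,y) dy and w(t,x) = ∫_{−∞}^x v(t,y) dy, and assume u(t,·), v(t,·), w(t,·) tend to 0 as |x| → ∞ for each t ∈ [0,T) and u(t,·), v(t,·) are square-integrable. Then both quantities Q(t) = ∫_ℝ u(t,x)² dx and E(t) = ∫_ℝ [ γ v(t,x)² + (1/3) u(t,x)³ ] dx are constant in t on [0,T). -/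
open MeasureTheory Filter Set intervalIntegral

/-- A decaying classical solution of the Ostrovsky–Hunter equation on the line,
on the set `S` of times (typically `[0,T)`): `u` is continuously differentiable
in `t`, twice continuously differentiable in `x`, integrable in `x` for each
time, and with `v(t,x) = ∫_{-∞}^x u(t,y) dy` the nonlocal equation
`u_t + u u_x = γ v` holds pointwise at positive times of `S`. -/
structure IsLineOHSolution (γ : ℝ) (S : Set ℝ) (u : ℝ → ℝ → ℝ) : Prop where
  diff_t : ∀ t ∈ S, ∀ x : ℝ, DifferentiableAt ℝ (fun s => u s x) t
  diff_x : ∀ t ∈ S, ∀ x : ℝ, DifferentiableAt ℝ (u t) x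
  diff_xx : ∀ t ∈ S, ∀ x : ℝ, DifferentiableAt ℝ (deriv (u t)) x
  cont_u : ContinuousOn (fun p : ℝ × ℝ => u p.1 p.2) (S ×ˢ (Set.univ : Set ℝ))
  cont_ut : ContinuousOn (fun p : ℝ × ℝ => deriv (fun s => u s p.2) p.1)
      (S ×ˢ (Set.univ : Set ℝ))
  cont_ux : ContinuousOn (fun p : ℝ × ℝ => deriv (u p.1) p.2) (S ×ˢ (Set.univ : Set ℝ))
  cont_uxx : ContinuousOn (fun p : ℝ × ℝ => deriv (deriv (u p.1)) p.2)
      (S ×ˢ (Set.univ : Set ℝ))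
  integrable : ∀ t ∈ S, MeasureTheory.Integrable (u t)
  eqn : ∀ t ∈ S, 0 < t → ∀ x : ℝ,
    deriv (fun s => u s x) t + u t x * deriv (u t) x = γ * ∫ y in Set.Iic x, u t y

/-!
No bound on `u` that is uniform in time is assumed, so differentiation under the integral sign is
not available at first. On a slab of times where the size `‖u‖_∞ + ‖u‖₂² + ‖v‖₂²` stays bounded,
the laws follow from local balance laws: `u²` and `u³` are densities with fluxes, and the
contribution of `v²` is recovered from the squared increments `(v (x + a) - v x)²`, which obey a
local balance law and whose integral tends to `2 ∫ v²` as `a → ∞`. Conversely, the conserved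
quantities and the maximum principle bound the size for a short time by a function of its value
at one instant. The size is lower semicontinuous in time, so Baire's theorem produces a bounded
interval inside any interval of times, and the short-time bound, applied forwards and backwards,
extends it to every compact interval of times.
-/

namespace OstrovskyHunter

open scoped Topology

section BalanceLaw

theorem norm_intervalIntegral_le_integral_norm {E : Type*} [NormedAddCommGroup E] [NormedSpace ℝ E]
    {μ : Measure ℝ} {f : ℝ → E} (hf : Integrable f μ) (a b : ℝ) :
    ‖∫ x in a..b, f x ∂μ‖ ≤ ∫ x, ‖f x‖ ∂μ :=
  norm_integral_le_integral_norm_uIoc.trans <|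
    setIntegral_le_integral hf.norm (Eventually.of_forall fun _ => norm_nonneg _)

theorem intervalIntegrable_and_tendsto_intervalIntegral_of_bounded {ι E : Type*}
    [NormedAddCommGroup E] [NormedSpace ℝ E] {l : Filter ι} [l.NeBot] [l.IsCountablyGenerated]
    {φ : ι → ℝ → E} {ψ : ℝ → E} {s t C : ℝ} (hst : s ≤ t)
    (hφ : ∀ i, AEStronglyMeasurable (φ i) (volume.restrict (Ioo s t)))
    (hC : ∀ i, ∀ τ ∈ Ioo s t, ‖φ i τ‖ ≤ C)
    (hlim : ∀ τ ∈ Ioo s t, Tendsto (fun i => φ i τ) l (𝓝 (ψ τ))) :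
    IntervalIntegrable ψ volume s t ∧
      Tendsto (fun i => ∫ τ in s..t, φ i τ) l (𝓝 (∫ τ in s..t, ψ τ)) := by
  have hlim' := ae_restrict_of_forall_mem (μ := volume) measurableSet_Ioo hlim
  have hψ : ∀ τ ∈ Ioo s t, ‖ψ τ‖ ≤ C := fun τ hτ =>
    le_of_tendsto (hlim τ hτ).norm (Eventually.of_forall fun i => hC i τ hτ)
  rw [intervalIntegrable_iff_integrableOn_Ioo_of_le hst]
  simp only [integral_of_le hst, integral_Ioc_eq_integral_Ioo]
  constructor
  · exact IntegrableOn.of_bound measure_Ioo_lt_top (aestronglyMeasurable_of_tendsto_ae l hφ hlim') C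
      (ae_restrict_of_forall_mem measurableSet_Ioo hψ)
  · exact tendsto_integral_filter_of_dominated_convergence (fun _ => C)
      (Eventually.of_forall hφ)
      (Eventually.of_forall fun i => ae_restrict_of_forall_mem measurableSet_Ioo (hC i))
      (integrable_const C) hlim'

theorem continuousOn_parametric_intervalIntegral {X E : Type*} [TopologicalSpace X]
    [NormedAddCommGroup E] [NormedSpace ℝ E] {μ : Measure ℝ} [NullSingletonClass μ]
    [IsLocallyFiniteMeasure μ] {S : Set X} {f : X → ℝ → E}
    (hf : ContinuousOn (Function.uncurry f) (S ×ˢ univ)) (a b : ℝ) :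
    ContinuousOn (fun x => ∫ y in a..b, f x y ∂μ) S := by
  rw [continuousOn_iff_continuous_domRestrict]
  exact continuous_parametric_intervalIntegral_of_continuous' (f := fun (x : S) y => f x y)
    (hf.comp_continuous (f := fun q : S × ℝ => ((q.1 : X), q.2)) (by fun_prop)
      fun q => ⟨q.1.2, trivial⟩) a b

theorem continuousOn_intervalIntegral_comp_add_left {X E : Type*} [TopologicalSpace X]
    [NormedAddCommGroup E] [NormedSpace ℝ E] {S : Set X} {f : X → ℝ → E}
    (hf : ContinuousOn (Function.uncurry f) (S ×ˢ univ)) (a b : ℝ) :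
    ContinuousOn (fun p : X × ℝ => ∫ y in a..b, f p.1 (p.2 + y)) (S ×ˢ univ) :=
  continuousOn_parametric_intervalIntegral (f := fun (p : X × ℝ) y => f p.1 (p.2 + y))
    (hf.comp (f := fun q : (X × ℝ) × ℝ => (q.1.1, q.1.2 + q.2)) (by fun_prop)
      fun _ hq => ⟨hq.1.1, mem_univ _⟩) a b

theorem continuous_of_continuousOn_uncurry {X Y Z : Type*} [TopologicalSpace X]
    [TopologicalSpace Y] [TopologicalSpace Z] {S : Set X} {f : X → Y → Z}
    (hf : ContinuousOn (Function.uncurry f) (S ×ˢ univ)) {x : X} (hx : x ∈ S) :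
    Continuous (f x) :=
  hf.comp_continuous (Continuous.prodMk_right x) fun _ => ⟨hx, trivial⟩

theorem continuousOn_of_continuousOn_uncurry {X Y Z : Type*} [TopologicalSpace X]
    [TopologicalSpace Y] [TopologicalSpace Z] {S : Set X} {f : X → Y → Z}
    (hf : ContinuousOn (Function.uncurry f) (S ×ˢ univ)) (y : Y) :
    ContinuousOn (fun x => f x y) S :=
  hf.comp (Continuous.prodMk_left y).continuousOn fun _ hx => ⟨hx, trivial⟩

variable {s t : ℝ} {f p F g : ℝ → ℝ → ℝ}

theorem integral_sub_eq_integral_integral_deriv (hst : s ≤ t)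
    (hf : ∀ x, ContinuousOn (fun τ => f τ x) (Icc s t))
    (hfp : ∀ τ ∈ Ioo s t, ∀ x, HasDerivAt (fun σ => f σ x) (p τ x) τ)
    (hp : ContinuousOn (Function.uncurry p) (Icc s t ×ˢ univ)) (a b : ℝ) :
    ∫ x in a..b, (f t x - f s x) = ∫ τ in s..t, ∫ x in a..b, p τ x := by
  have htime (x : ℝ) : f t x - f s x = ∫ τ in s..t, p τ x := by
    refine (integral_eq_sub_of_hasDerivAt_of_le hst (hf x) (fun τ hτ => hfp τ hτ x) ?_).symm
    rw [← uIcc_of_le hst] at hp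
    exact (continuousOn_of_continuousOn_uncurry hp x).intervalIntegrable
  simp only [htime]
  refine (intervalIntegral_intervalIntegral_swap ?_).symm
  rw [← uIcc_of_le hst] at hp
  exact ((hp.mono (prod_mono_right (subset_univ (uIcc a b)))).integrableOn_compact
    (isCompact_uIcc.prod isCompact_uIcc)).mono_set
      (prod_mono uIoc_subset_uIcc uIoc_subset_uIcc)

theorem intervalIntegrable_integral_source_and_integral_sub_eq {C K : ℝ} (hst : s ≤ t)
    (hf : ∀ x, ContinuousOn (fun τ => f τ x) (Icc s t))
    (hfp : ∀ τ ∈ Ioo s t, ∀ x, HasDerivAt (fun σ => f σ x) (p τ x) τ)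
    (hp : ContinuousOn (Function.uncurry p) (Icc s t ×ˢ univ))
    (hF : ∀ τ ∈ Ioo s t, ∀ x, HasDerivAt (F τ) (p τ x - g τ x) x)
    (hF0 : ∀ τ ∈ Ioo s t, Tendsto (F τ) (cocompact ℝ) (𝓝 0))
    (hFC : ∀ τ ∈ Ioo s t, ∀ x, |F τ x| ≤ C)
    (hg : ∀ τ ∈ Ioo s t, Integrable (g τ))
    (hgC : ∀ τ ∈ Ioo s t, ∫ x, |g τ x| ≤ K)
    (hs : Integrable (f s)) (ht : Integrable (f t)) :
    IntervalIntegrable (fun τ => ∫ x, g τ x) volume s t ∧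
      (∫ x, f t x) - ∫ x, f s x = ∫ τ in s..t, ∫ x, g τ x := by
  have hspace (τ) (hτ : τ ∈ Ioo s t) (R : ℝ) :
      ∫ x in -R..R, p τ x = (F τ R - F τ (-R)) + ∫ x in -R..R, g τ x := by
    have hpi : IntervalIntegrable (p τ) volume (-R) R :=
      (continuous_of_continuousOn_uncurry hp (Ioo_subset_Icc_self hτ)).intervalIntegrable _ _
    have hgi : IntervalIntegrable (g τ) volume (-R) R := (hg τ hτ).intervalIntegrable
    rw [← integral_eq_sub_of_hasDerivAt (fun x _ => hF τ hτ x) (hpi.sub hgi),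
      intervalIntegral.integral_sub hpi hgi]
    ring
  have hbound (R τ : ℝ) (hτ : τ ∈ Ioo s t) : ‖∫ x in -R..R, p τ x‖ ≤ C + C + K := by
    rw [hspace τ hτ]
    exact (norm_add_le _ _).trans (add_le_add ((norm_sub_le _ _).trans
      (add_le_add (hFC τ hτ _) (hFC τ hτ _)))
      ((norm_intervalIntegral_le_integral_norm (hg τ hτ) _ _).trans (hgC τ hτ)))
  have hlim (τ) (hτ : τ ∈ Ioo s t) :
      Tendsto (fun R : ℝ => ∫ x in -R..R, p τ x) atTop (𝓝 (∫ x, g τ x)) := by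
    have hF0τ := hF0 τ hτ
    rw [cocompact_eq_atBot_atTop, tendsto_sup] at hF0τ
    simpa [hspace τ hτ] using (hF0τ.2.sub (hF0τ.1.comp tendsto_neg_atTop_atBot)).add
      (intervalIntegral_tendsto_integral (hg τ hτ) tendsto_neg_atTop_atBot tendsto_id)
  have hmeas (R : ℝ) : AEStronglyMeasurable (fun τ => ∫ x in -R..R, p τ x)
      (volume.restrict (Ioo s t)) :=
    ((continuousOn_parametric_intervalIntegral hp _ _).mono
      Ioo_subset_Icc_self).aestronglyMeasurable measurableSet_Ioo
  obtain ⟨hgi, htime⟩ :=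
    intervalIntegrable_and_tendsto_intervalIntegral_of_bounded hst hmeas hbound hlim
  refine ⟨hgi, ?_⟩
  simp only [← integral_sub_eq_integral_integral_deriv hst hf hfp hp] at htime
  rw [← MeasureTheory.integral_sub ht hs]
  exact tendsto_nhds_unique
    (intervalIntegral_tendsto_integral (ht.sub hs) tendsto_neg_atTop_atBot tendsto_id) htime

end BalanceLaw

theorem hasDerivAt_parametric_intervalIntegral {E : Type*} [NormedAddCommGroup E]
    [NormedSpace ℝ E] {s t : ℝ} {f f' : ℝ → ℝ → E}
    (hf : ContinuousOn (Function.uncurry f) (Icc s t ×ˢ univ))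
    (hf' : ContinuousOn (Function.uncurry f') (Icc s t ×ˢ univ))
    (hff' : ∀ τ ∈ Ioo s t, ∀ y, HasDerivAt (fun σ => f σ y) (f' τ y) τ)
    {τ : ℝ} (hτ : τ ∈ Ioo s t) (a b : ℝ) :
    HasDerivAt (fun σ => ∫ y in a..b, f σ y) (∫ y in a..b, f' τ y) τ := by
  obtain ⟨C, hC⟩ := (isCompact_Icc.prod isCompact_uIcc).exists_bound_of_continuousOn
    (hf'.mono (prod_mono_right (subset_univ (uIcc a b))))
  have hcont {σ : ℝ} (hσ : σ ∈ Ioo s t) : Continuous (f σ) :=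
    continuous_of_continuousOn_uncurry hf (Ioo_subset_Icc_self hσ)
  refine (hasDerivAt_integral_of_dominated_loc_of_deriv_le (F := f) (F' := f')
    (bound := fun _ => C) (Ioo_mem_nhds hτ.1 hτ.2) ?_ ?_ ?_ ?_ intervalIntegrable_const ?_).2
  · filter_upwards [Ioo_mem_nhds hτ.1 hτ.2] with σ hσ using (hcont hσ).aestronglyMeasurable
  · exact (hcont hτ).intervalIntegrable a b
  · exact (continuous_of_continuousOn_uncurry hf'
      (Ioo_subset_Icc_self hτ)).aestronglyMeasurable
  · exact Eventually.of_forall fun y hy σ hσ =>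
      hC (σ, y) ⟨Ioo_subset_Icc_self hσ, uIoc_subset_uIcc hy⟩
  · exact Eventually.of_forall fun y _ σ hσ => hff' σ hσ y

section Decorrelation

variable {f g : ℝ → ℝ} {c : ℝ}

theorem norm_youngExcess_le (hc : 0 < c) (y z : ℝ) :
    ‖max (|y * z| - c * z ^ 2) 0‖ ≤ y ^ 2 / (4 * c) := by
  rw [Real.norm_of_nonneg (le_max_right _ _)]
  refine max_le ?_ (by positivity)
  rw [le_div_iff₀ (by positivity), abs_mul, ← sq_abs y, ← sq_abs z]
  nlinarith [sq_nonneg (2 * c * |z| - |y|)]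

theorem tendsto_integral_youngExcess_comp_add_right {l : Filter ℝ} [l.IsCountablyGenerated]
    (hc : 0 < c) (hf : Continuous f) (hg : Continuous g) (hf2 : Integrable fun x => f x ^ 2)
    (hg0 : ∀ x, Tendsto (fun a => g (x + a)) l (𝓝 0)) :
    Tendsto (fun a => ∫ x, max (|f x * g (x + a)| - c * g (x + a) ^ 2) 0) l (𝓝 0) := by
  suffices Tendsto (fun a => ∫ x, max (|f x * g (x + a)| - c * g (x + a) ^ 2) 0) l
      (𝓝 (∫ _ : ℝ, (0 : ℝ))) by simpa only [integral_zero] using this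
  refine tendsto_integral_filter_of_dominated_convergence _
    (Eventually.of_forall fun a => by fun_prop)
    (Eventually.of_forall fun a => Eventually.of_forall fun x => norm_youngExcess_le hc _ _)
    (hf2.div_const (4 * c)) (Eventually.of_forall fun x => ?_)
  have h := ((((hg0 x).const_mul (f x)).abs).sub (((hg0 x).pow 2).const_mul c)).max
    (tendsto_const_nhds (x := (0 : ℝ)))
  simpa only [mul_zero, abs_zero, zero_pow two_ne_zero, sub_zero, max_self] using h

/-- Young's inequality `|y z| ≤ c z² + (|y z| - c z²)⁺` leaves an excess dominated by `y² / (4c)`,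
so dominated convergence applies to the excess although it does not to the product. -/
theorem tendsto_integral_mul_comp_add_right {l : Filter ℝ} [l.IsCountablyGenerated]
    (hf : Continuous f) (hg : Continuous g) (hf2 : Integrable fun x => f x ^ 2)
    (hg2 : Integrable fun x => g x ^ 2) (hg0 : ∀ x, Tendsto (fun a => g (x + a)) l (𝓝 0)) :
    Tendsto (fun a => ∫ x, f x * g (x + a)) l (𝓝 0) := by
  refine NormedAddGroup.tendsto_nhds_zero.2 fun ε hε => ?_
  set G := ∫ x, g x ^ 2
  have hG : 0 ≤ G := integral_nonneg fun x => sq_nonneg (g x)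
  obtain ⟨c, hc, hcG⟩ : ∃ c > 0, c * G < ε :=
    ⟨ε / (G + 1), by positivity, by rw [div_mul_eq_mul_div, div_lt_iff₀] <;> nlinarith⟩
  filter_upwards [(tendsto_integral_youngExcess_comp_add_right hc hf hg hf2 hg0).eventually_lt_const
    (sub_pos.2 hcG)] with a ha
  have hexcess : Integrable fun x => max (|f x * g (x + a)| - c * g (x + a) ^ 2) 0 :=
    (hf2.div_const (4 * c)).mono' (by fun_prop)
      (Eventually.of_forall fun x => norm_youngExcess_le hc _ _)
  have hsq : Integrable fun x => c * g (x + a) ^ 2 := (hg2.comp_add_right a).const_mul c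
  calc ‖∫ x, f x * g (x + a)‖
      ≤ ∫ x, (c * g (x + a) ^ 2 + max (|f x * g (x + a)| - c * g (x + a) ^ 2) 0) :=
        norm_integral_le_of_norm_le (hsq.add hexcess) <| Eventually.of_forall fun x =>
          sub_le_iff_le_add'.1 (le_max_left _ _)
    _ = c * G + ∫ x, max (|f x * g (x + a)| - c * g (x + a) ^ 2) 0 := by
        rw [integral_add hsq hexcess, MeasureTheory.integral_const_mul,
          integral_add_right_eq_self (fun x => g x ^ 2) a]
    _ < ε := by linarith

end Decorrelation

section LowerSemicontinuity

theorem lowerSemicontinuousOn_integral {X : Type*} [TopologicalSpace X] {S : Set X}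
    {f : X → ℝ → ℝ} (hf : ContinuousOn (Function.uncurry f) (S ×ˢ univ))
    (hf0 : ∀ x ∈ S, 0 ≤ f x) (hfi : ∀ x ∈ S, Integrable (f x)) :
    LowerSemicontinuousOn (fun x => ∫ y, f x y) S := by
  intro x hx m hm
  obtain ⟨R, hmR, hR⟩ : ∃ R : ℝ, m < ∫ y in -R..R, f x y ∧ 0 ≤ R :=
    (((intervalIntegral_tendsto_integral (hfi x hx) tendsto_neg_atTop_atBot
      tendsto_id).eventually_const_lt hm).and (eventually_ge_atTop 0)).exists
  filter_upwards [(continuousOn_parametric_intervalIntegral hf (-R) R x hx).eventually_const_lt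
    hmR, self_mem_nhdsWithin] with z hz hzS
  rw [integral_of_le (by linarith)] at hz
  exact hz.trans_le (setIntegral_le_integral (hfi z hzS) (Eventually.of_forall (hf0 z hzS)))

theorem exists_isOpen_nonempty_bddAbove_image_of_lowerSemicontinuous {X : Type*}
    [TopologicalSpace X] [BaireSpace X] [Nonempty X] {Φ : X → ℝ}
    (hΦ : LowerSemicontinuous Φ) : ∃ U : Set X, IsOpen U ∧ U.Nonempty ∧ BddAbove (Φ '' U) := by
  have hcover : ⋃ n : ℕ, Φ ⁻¹' Iic (n : ℝ) = univ :=
    iUnion_eq_univ_iff.2 fun x => exists_nat_ge (Φ x)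
  obtain ⟨n, hn⟩ := nonempty_interior_of_iUnion_of_closed
    (fun n : ℕ => lowerSemicontinuous_iff_isClosed_preimage.1 hΦ n) hcover
  exact ⟨_, isOpen_interior, hn, n, forall_mem_image.2 fun x hx =>
    (interior_subset hx : x ∈ Φ ⁻¹' Iic (n : ℝ))⟩

theorem bddAbove_image_of_isBoundedUnder_nhdsWithin {X α : Type*} [TopologicalSpace X]
    [Preorder α] [IsDirected α (· ≤ ·)] [Nonempty α] {K : Set X} (hK : IsCompact K) {Φ : X → α}
    (hΦ : ∀ x ∈ K, (𝓝[K] x).IsBoundedUnder (· ≤ ·) Φ) : BddAbove (Φ '' K) := by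
  refine hK.induction_on (p := fun S => BddAbove (Φ '' S)) (by simp)
    (fun _ _ hST hT => hT.mono (image_mono hST))
    (fun _ _ hS hT => by rw [image_union]; exact hS.union hT) fun x hx => ?_
  obtain ⟨C, hC⟩ := hΦ x hx
  exact ⟨_, hC, C, forall_mem_image.2 fun _ => id⟩

end LowerSemicontinuity

section Propagation

theorem isOpen_setOf_isBoundedUnder_nhds {X α : Type*} [TopologicalSpace X] [LE α] (Φ : X → α) :
    IsOpen {x | (𝓝 x).IsBoundedUnder (· ≤ ·) Φ} := by
  refine isOpen_iff_mem_nhds.2 fun x ⟨C, hC⟩ => ?_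
  filter_upwards [eventually_eventually_nhds.2 (eventually_map.1 hC)] with y hy
  exact ⟨C, hy⟩

theorem exists_nearest_notMem_uIcc {G : Set ℝ} (hG : IsOpen G) {t₀ : ℝ} (ht₀ : t₀ ∉ G) (t : ℝ) :
    ∃ a ∈ uIcc t₀ t, a ∉ G ∧ ∀ τ ∈ uIcc a t, τ ≠ a → τ ∈ G := by
  obtain ⟨a, ⟨ha, haG⟩, hmin⟩ := (isCompact_uIcc.inter_right hG.isClosed_compl).exists_isMinOn
    (s := uIcc t₀ t ∩ Gᶜ) ⟨t₀, left_mem_uIcc, ht₀⟩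
    (f := fun τ => |t - τ|) (by fun_prop)
  refine ⟨a, ha, haG, fun τ hτ hne => by_contra fun hτG => hne ?_⟩
  have hle : |t - a| ≤ |t - τ| := hmin ⟨uIcc_subset_uIcc_right ha hτ, hτG⟩
  rcases le_total a t with hat | hta
  · rw [uIcc_of_le hat] at hτ
    rw [abs_of_nonneg (sub_nonneg.2 hat), abs_of_nonneg (sub_nonneg.2 hτ.2)] at hle
    linarith [hτ.1]
  · rw [uIcc_of_ge hta] at hτ
    rw [abs_of_nonpos (sub_nonpos.2 hta), abs_of_nonpos (sub_nonpos.2 hτ.1)] at hle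
    linarith [hτ.2]

theorem exists_nhds_bound_of_lowerSemicontinuousOn {K : Set ℝ} (hK : IsLocallyClosed K)
    (hne : K.Nonempty) {Φ : ℝ → ℝ} (hΦ : LowerSemicontinuousOn Φ K) :
    ∃ t₀ ∈ K, ∃ N, ∀ᶠ t in 𝓝 t₀, t ∈ K → Φ t ≤ N := by
  have := hK.locallyCompactSpace
  have := hne.to_subtype
  obtain ⟨U, hU, ⟨t₀, ht₀⟩, N, hN⟩ := exists_isOpen_nonempty_bddAbove_image_of_lowerSemicontinuous
    (lowerSemicontinuous_restrict_iff.2 hΦ)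
  obtain ⟨V, hV, rfl⟩ := isOpen_induced_iff.1 hU
  refine ⟨t₀, t₀.2, N, ?_⟩
  filter_upwards [hV.mem_nhds ht₀] with t htV htK
  exact hN ⟨⟨t, htK⟩, htV, rfl⟩

theorem isBoundedUnder_nhds_of_lowerSemicontinuousOn {I : Set ℝ} (hI : IsOpen I) {Φ : ℝ → ℝ}
    (hΦ : LowerSemicontinuousOn Φ I)
    (hstep : ∀ N, ∃ δ > 0, ∃ C, ∀ a ∈ I, ∀ t ∈ I, |t - a| < δ → Φ a ≤ N →
      (∀ τ ∈ uIcc a t, τ ≠ a → (𝓝 τ).IsBoundedUnder (· ≤ ·) Φ) → Φ t ≤ C) :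
    ∀ τ ∈ I, (𝓝 τ).IsBoundedUnder (· ≤ ·) Φ := by
  set G := {τ | (𝓝 τ).IsBoundedUnder (· ≤ ·) Φ}
  have hG : IsOpen G := isOpen_setOf_isBoundedUnder_nhds Φ
  by_contra! hbad
  obtain ⟨t₀, ⟨ht₀I, ht₀G⟩, N, hN⟩ := exists_nhds_bound_of_lowerSemicontinuousOn
    (hI.isLocallyClosed.inter hG.isClosed_compl.isLocallyClosed) hbad (hΦ.mono inter_subset_left)
  obtain ⟨δ, hδ, C, hC⟩ := hstep N
  obtain ⟨r, hr, hball⟩ := Metric.mem_nhds_iff.1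
    (inter_mem (inter_mem hN (hI.mem_nhds ht₀I)) (Metric.ball_mem_nhds t₀ hδ))
  refine ht₀G ⟨C, eventually_map.2 ?_⟩
  filter_upwards [Metric.ball_mem_nhds t₀ hr] with t ht
  obtain ⟨a, ha, haG, hat⟩ := exists_nearest_notMem_uIcc hG ht₀G t
  have ha_ball : a ∈ Metric.ball t₀ r := by
    rw [uIcc_comm] at ha
    exact (Real.dist_right_le_of_mem_uIcc ha).trans_lt ht
  obtain ⟨⟨haN, haI⟩, -⟩ := hball ha_ball
  obtain ⟨⟨-, htI⟩, htδ⟩ := hball ht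
  refine hC a haI t htI ?_ (haN ⟨haI, haG⟩) hat
  rw [abs_sub_comm]
  exact (Real.dist_right_le_of_mem_uIcc ha).trans_lt (by rwa [dist_comm])

end Propagation

section MaximumPrinciple

theorem hasDerivAt_nonneg_of_isMaxOn_Icc {f : ℝ → ℝ} {f' s t : ℝ} (hst : s < t)
    (hf : HasDerivAt f f' t) (hmax : IsMaxOn f (Icc s t) t) : 0 ≤ f' := by
  have hcone : s - t ∈ posTangentConeAt (Icc s t) t := sub_mem_posTangentConeAt_of_segment_subset
    ((convex_Icc s t).segment_subset (right_mem_Icc.2 hst.le) (left_mem_Icc.2 hst.le))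
  have hdir := hmax.localize.hasFDerivWithinAt_nonpos hf.hasFDerivAt.hasFDerivWithinAt hcone
  simp only [ContinuousLinearMap.toSpanSingleton_apply, smul_eq_mul] at hdir
  nlinarith

variable {s t m : ℝ}

theorem le_of_deriv_neg_at_critical_points {z zt zx : ℝ → ℝ → ℝ} {R : ℝ} (hst : s ≤ t)
    (hz : ContinuousOn (Function.uncurry z) (Icc s t ×ˢ univ))
    (hzt : ∀ τ ∈ Ioc s t, ∀ x, HasDerivAt (fun σ => z σ x) (zt τ x) τ)
    (hzx : ∀ τ ∈ Ioc s t, ∀ x, HasDerivAt (z τ) (zx τ x) x)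
    (hcrit : ∀ τ ∈ Ioc s t, ∀ x, zx τ x = 0 → zt τ x < 0)
    (hR : ∀ τ ∈ Icc s t, ∀ x, R ≤ |x| → z τ x ≤ m) (hs : ∀ x, z s x ≤ m) (x₀ : ℝ) :
    z t x₀ ≤ m := by
  by_contra! hlt
  have hmem : (t, x₀) ∈ Icc s t ×ˢ Icc (-R) R :=
    ⟨right_mem_Icc.2 hst, abs_le.1 (lt_of_not_ge fun h =>
      (hR t (right_mem_Icc.2 hst) x₀ h).not_gt hlt).le⟩
  obtain ⟨⟨τ, x⟩, ⟨hτ, hx⟩, hmax⟩ := (isCompact_Icc.prod isCompact_Icc).exists_isMaxOn ⟨_, hmem⟩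
    (hz.mono (prod_mono_right (subset_univ (Icc (-R) R))))
  have hgt : m < z τ x := hlt.trans_le (hmax hmem)
  have hτ' : τ ∈ Ioc s t := ⟨hτ.1.lt_of_ne fun h => (hs x).not_gt (h ▸ hgt), hτ.2⟩
  have hxR : |x| < R := lt_of_not_ge fun h => (hR τ hτ x h).not_gt hgt
  have hspace : zx τ x = 0 := by
    refine IsLocalMax.hasDerivAt_eq_zero (f := z τ) ?_ (hzx τ hτ' x)
    filter_upwards [Icc_mem_nhds (abs_lt.1 hxR).1 (abs_lt.1 hxR).2] with ξ hξ
    exact hmax (⟨hτ, hξ⟩ : (τ, ξ) ∈ Icc s t ×ˢ Icc (-R) R)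
  have htime : 0 ≤ zt τ x := hasDerivAt_nonneg_of_isMaxOn_Icc hτ'.1 (hzt τ hτ' x) fun σ hσ =>
    hmax (⟨⟨hσ.1, hσ.2.trans hτ.2⟩, hx⟩ : (σ, x) ∈ Icc s t ×ˢ Icc (-R) R)
  exact htime.not_gt (hcrit τ hτ' x hspace)

theorem hasDerivAt_sqrt_one_add_sq (x : ℝ) :
    HasDerivAt (fun x : ℝ => √(1 + x ^ 2)) (x / √(1 + x ^ 2)) x := by
  refine (((hasDerivAt_pow 2 x).const_add 1).sqrt (by positivity)).congr_deriv ?_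
  field_simp
  ring

theorem abs_le_sqrt_one_add_sq (x : ℝ) : |x| ≤ √(1 + x ^ 2) := Real.abs_le_sqrt (by linarith)

theorem abs_div_sqrt_one_add_sq_le_one (x : ℝ) : |x / √(1 + x ^ 2)| ≤ 1 := by
  rw [abs_div, abs_of_nonneg (Real.sqrt_nonneg _)]
  exact div_le_one_of_le₀ (abs_le_sqrt_one_add_sq x) (Real.sqrt_nonneg _)

variable {y yt yx a : ℝ → ℝ → ℝ} {A B G : ℝ}

/-- Subtracting `ε √(1 + x²)` confines the maximum to a compact set, at the cost of an error of
size `A ε` in the transport inequality. -/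
theorem le_add_of_transport_le_of_pos {ε : ℝ} (hε : 0 < ε) (hst : s ≤ t)
    (hy : ContinuousOn (Function.uncurry y) (Icc s t ×ˢ univ))
    (hyt : ∀ τ ∈ Ioc s t, ∀ x, HasDerivAt (fun σ => y σ x) (yt τ x) τ)
    (hyx : ∀ τ ∈ Ioc s t, ∀ x, HasDerivAt (y τ) (yx τ x) x)
    (hle : ∀ τ ∈ Ioc s t, ∀ x, yt τ x + a τ x * yx τ x ≤ G)
    (ha : ∀ τ ∈ Ioc s t, ∀ x, |a τ x| ≤ A) (hB : ∀ τ ∈ Icc s t, ∀ x, y τ x ≤ B)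
    (hs : ∀ x, y s x ≤ m) (x : ℝ) :
    y t x ≤ m + G * (t - s) + ε * (√(1 + x ^ 2) + (A + 1) * (t - s)) := by
  set κ := G + (A + 1) * ε
  suffices y t x - ε * √(1 + x ^ 2) - κ * (t - s) ≤ m by simp only [κ] at this; linarith
  refine le_of_deriv_neg_at_critical_points (R := (B + |κ| * (t - s) - m) / ε)
    (z := fun τ x => y τ x - ε * √(1 + x ^ 2) - κ * (τ - s))
    (zt := fun τ x => yt τ x - κ) (zx := fun τ x => yx τ x - ε * (x / √(1 + x ^ 2)))
    hst ?_ ?_ ?_ ?_ ?_ ?_ x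
  · exact (hy.sub (by fun_prop)).sub (by fun_prop)
  · intro τ hτ x
    simpa using ((hyt τ hτ x).sub_const _).fun_sub
      (((hasDerivAt_id τ).sub_const s).const_mul κ)
  · exact fun τ hτ x => ((hyx τ hτ x).fun_sub
      ((hasDerivAt_sqrt_one_add_sq x).const_mul ε)).sub_const _
  · intro τ hτ x hcrit
    have hslope : |yx τ x| ≤ ε := by
      rw [sub_eq_zero.1 hcrit, abs_mul, abs_of_pos hε]
      exact mul_le_of_le_one_right hε.le (abs_div_sqrt_one_add_sq_le_one x)
    have hflux : |a τ x * yx τ x| ≤ A * ε := by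
      rw [abs_mul]
      exact mul_le_mul (ha τ hτ x) hslope (abs_nonneg _) ((abs_nonneg _).trans (ha τ hτ x))
    linarith [hle τ hτ x, neg_le_of_abs_le hflux]
  · intro τ hτ x hx
    have hdrift : -κ * (τ - s) ≤ |κ| * (t - s) :=
      mul_le_mul (neg_le_abs κ) (by linarith [hτ.2]) (by linarith [hτ.1]) (abs_nonneg κ)
    have hfar := (div_le_iff₀' hε).1 (hx.trans (abs_le_sqrt_one_add_sq x))
    linarith [hB τ hτ x]
  · intro x
    have := mul_nonneg hε.le (Real.sqrt_nonneg (1 + x ^ 2))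
    linarith [hs x]

theorem le_add_of_transport_le (hst : s ≤ t)
    (hy : ContinuousOn (Function.uncurry y) (Icc s t ×ˢ univ))
    (hyt : ∀ τ ∈ Ioo s t, ∀ x, HasDerivAt (fun σ => y σ x) (yt τ x) τ)
    (hyx : ∀ τ ∈ Ioo s t, ∀ x, HasDerivAt (y τ) (yx τ x) x)
    (hle : ∀ τ ∈ Ioo s t, ∀ x, yt τ x + a τ x * yx τ x ≤ G)
    (ha : ∀ τ ∈ Ioo s t, ∀ x, |a τ x| ≤ A) (hB : ∀ τ ∈ Icc s t, ∀ x, y τ x ≤ B)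
    (hs : ∀ x, y s x ≤ m) (x : ℝ) :
    y t x ≤ m + G * (t - s) := by
  have hinterior (τ) (hτ : τ ∈ Ico s t) : y τ x ≤ m + G * (τ - s) := by
    have hsub : Ioc s τ ⊆ Ioo s t := fun σ hσ => ⟨hσ.1, hσ.2.trans_lt hτ.2⟩
    have hsub' : Icc s τ ⊆ Icc s t := Icc_subset_Icc_right hτ.2.le
    have hε (ε : ℝ) (hε : 0 < ε) := le_add_of_transport_le_of_pos hε hτ.1
      (hy.mono (prod_mono_left hsub')) (fun σ hσ => hyt σ (hsub hσ)) (fun σ hσ => hyx σ (hsub hσ))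
      (fun σ hσ => hle σ (hsub hσ)) (fun σ hσ => ha σ (hsub hσ)) (fun σ hσ => hB σ (hsub' hσ)) hs x
    have hlim : Tendsto (fun ε : ℝ => m + G * (τ - s) + ε * (√(1 + x ^ 2) + (A + 1) * (τ - s)))
        (𝓝[>] 0) (𝓝 (m + G * (τ - s))) := by
      refine tendsto_nhdsWithin_of_tendsto_nhds (Continuous.tendsto' (by fun_prop) _ _ (by simp))
    exact ge_of_tendsto hlim (eventually_mem_nhdsWithin.mono hε)
  rcases hst.eq_or_lt with rfl | hlt
  · simpa using hs x
  · have hclosure : t ∈ closure (Ico s t) := by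
      rw [closure_Ico hlt.ne]; exact right_mem_Icc.2 hst
    exact ContinuousWithinAt.closure_le hclosure
      ((continuousOn_of_continuousOn_uncurry hy x t (right_mem_Icc.2 hst)).mono Ico_subset_Icc_self)
      (by fun_prop) hinterior

end MaximumPrinciple

theorem abs_two_mul_mul_le_add_sq (a b : ℝ) : |2 * a * b| ≤ b ^ 2 + a ^ 2 :=
  abs_le.2 ⟨by nlinarith [sq_nonneg (a + b)], by nlinarith [sq_nonneg (a - b)]⟩

theorem isCountablyGenerated_cocompact_real : (cocompact ℝ).IsCountablyGenerated := by
  rw [cocompact_eq_atBot_atTop]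
  infer_instance

theorem bddAbove_range_norm_of_tendsto_zero_cocompact {X E : Type*} [TopologicalSpace X]
    [SeminormedAddCommGroup E] {f : X → E} (hf : Continuous f)
    (hf0 : Tendsto f (cocompact X) (𝓝 0)) : BddAbove (range fun x => ‖f x‖) := by
  obtain ⟨C, hC⟩ := ZeroAtInftyContinuousMap.isBounded_range
    (⟨⟨f, hf⟩, hf0⟩ : ZeroAtInftyContinuousMap X E) |>.exists_norm_le
  exact ⟨C, forall_mem_range.2 fun x => hC _ (mem_range_self x)⟩

/-- The state of a decaying solution at a single time: a continuous square-integrable `u` vanishing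
at infinity, with a square-integrable primitive `v`. -/
structure DecayingProfile (u v : ℝ → ℝ) : Prop where
  continuous : Continuous u
  hasDerivAt : ∀ x, HasDerivAt v (u x) x
  tendsto_zero : Tendsto u (cocompact ℝ) (𝓝 0)
  integrable_sq : Integrable fun x => u x ^ 2
  integrable_primitive_sq : Integrable fun x => v x ^ 2

/-- The norm `‖u‖_∞ + ‖u‖₂² + ‖v‖₂²` (with mixed homogeneity) controlling the evolution. -/
noncomputable def size (u v : ℝ → ℝ) : ℝ := (⨆ x, |u x|) + ∫ x, (u x ^ 2 + v x ^ 2)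

/-- The second conserved quantity `E = ∫ (γ v² + u³ / 3)`. -/
noncomputable def energy (γ : ℝ) (u v : ℝ → ℝ) : ℝ := ∫ x, (γ * v x ^ 2 + 1 / 3 * u x ^ 3)

namespace DecayingProfile

variable {u v w : ℝ → ℝ} {M : ℝ}

theorem comp_neg (h : DecayingProfile u v) :
    DecayingProfile (fun x => u (-x)) (fun x => -v (-x)) where
  continuous := h.continuous.comp continuous_neg
  hasDerivAt x := by
    simpa [Function.comp_def] using ((h.hasDerivAt (-x)).comp x (hasDerivAt_neg x)).fun_neg
  tendsto_zero := h.tendsto_zero.comp (Homeomorph.neg ℝ).isClosedEmbedding.tendsto_cocompact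
  integrable_sq := h.integrable_sq.comp_neg
  integrable_primitive_sq := by simpa using h.integrable_primitive_sq.comp_neg

theorem continuous_primitive (h : DecayingProfile u v) : Continuous v :=
  continuous_iff_continuousAt.2 fun x => (h.hasDerivAt x).continuousAt

theorem integrable_sq_add_sq (h : DecayingProfile u v) : Integrable fun x => u x ^ 2 + v x ^ 2 :=
  h.integrable_sq.add h.integrable_primitive_sq

theorem hasDerivAt_primitive_sq (h : DecayingProfile u v) (x : ℝ) :
    HasDerivAt (fun x => v x ^ 2) (2 * v x * u x) x := by
  simpa using (h.hasDerivAt x).fun_pow 2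

theorem integrable_two_mul_primitive_mul (h : DecayingProfile u v) :
    Integrable fun x => 2 * v x * u x :=
  h.integrable_sq_add_sq.mono'
    ((continuous_const.mul h.continuous_primitive).mul h.continuous).aestronglyMeasurable
    (Eventually.of_forall fun x => abs_two_mul_mul_le_add_sq (v x) (u x))

theorem tendsto_primitive_zero (h : DecayingProfile u v) : Tendsto v (cocompact ℝ) (𝓝 0) := by
  have hsq : Tendsto (fun x => v x ^ 2) (cocompact ℝ) (𝓝 0) := by
    rw [cocompact_eq_atBot_atTop]
    exact (tendsto_zero_of_hasDerivAt_of_integrableOn_Iic (a := 0)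
        (fun x _ => h.hasDerivAt_primitive_sq x) h.integrable_two_mul_primitive_mul.integrableOn
        h.integrable_primitive_sq.integrableOn).sup
      (tendsto_zero_of_hasDerivAt_of_integrableOn_Ioi (a := 0)
        (fun x _ => h.hasDerivAt_primitive_sq x) h.integrable_two_mul_primitive_mul.integrableOn
        h.integrable_primitive_sq.integrableOn)
  rw [tendsto_zero_iff_abs_tendsto_zero]
  simpa [Function.comp_def, Real.sqrt_sq_eq_abs] using hsq.sqrt

theorem primitive_sq_le (h : DecayingProfile u v) (x : ℝ) :
    v x ^ 2 ≤ ∫ y, (u y ^ 2 + v y ^ 2) := by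
  have hftc := integral_Iic_of_hasDerivAt_of_tendsto' (a := x)
    (fun x _ => h.hasDerivAt_primitive_sq x) h.integrable_two_mul_primitive_mul.integrableOn
    ((h.tendsto_primitive_zero.mono_left atBot_le_cocompact).pow 2)
  rw [zero_pow two_ne_zero, sub_zero] at hftc
  rw [← hftc]
  exact (setIntegral_mono h.integrable_two_mul_primitive_mul.integrableOn
      h.integrable_sq_add_sq.integrableOn
      fun y => (le_abs_self _).trans (abs_two_mul_mul_le_add_sq (v y) (u y))).trans
    (setIntegral_le_integral h.integrable_sq_add_sq
      (Eventually.of_forall fun y => add_nonneg (sq_nonneg _) (sq_nonneg _)))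

theorem bddAbove_range_abs (h : DecayingProfile u v) : BddAbove (range fun x => |u x|) :=
  bddAbove_range_norm_of_tendsto_zero_cocompact h.continuous h.tendsto_zero

theorem iSup_abs_nonneg (u : ℝ → ℝ) : 0 ≤ ⨆ x, |u x| := Real.iSup_nonneg fun x => abs_nonneg (u x)

theorem abs_le_size (h : DecayingProfile u v) (x : ℝ) : |u x| ≤ size u v :=
  (le_ciSup h.bddAbove_range_abs x).trans <| le_add_of_nonneg_right <|
    integral_nonneg fun x => add_nonneg (sq_nonneg (u x)) (sq_nonneg (v x))

theorem primitive_sq_le_size (h : DecayingProfile u v) (x : ℝ) : v x ^ 2 ≤ size u v :=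
  (h.primitive_sq_le x).trans (le_add_of_nonneg_left (iSup_abs_nonneg u))

theorem integral_sq_le_size (h : DecayingProfile u v) : ∫ x, u x ^ 2 ≤ size u v :=
  (integral_mono h.integrable_sq h.integrable_sq_add_sq fun x =>
    le_add_of_nonneg_right (sq_nonneg (v x))).trans (le_add_of_nonneg_left (iSup_abs_nonneg u))

theorem integral_primitive_sq_le_size (h : DecayingProfile u v) : ∫ x, v x ^ 2 ≤ size u v :=
  (integral_mono h.integrable_primitive_sq h.integrable_sq_add_sq fun x =>
    le_add_of_nonneg_left (sq_nonneg (u x))).trans (le_add_of_nonneg_left (iSup_abs_nonneg u))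

section BoundedWeight

variable (h : DecayingProfile u v)
include h

theorem integrable_mul_sq (hw : Continuous w) (hM : ∀ x, |w x| ≤ M) :
    Integrable fun x => w x * u x ^ 2 :=
  h.integrable_sq.bdd_mul hw.aestronglyMeasurable (Eventually.of_forall hM)

theorem integral_abs_mul_sq_le (hw : Continuous w) (hM : ∀ x, |w x| ≤ M) :
    ∫ x, |w x * u x ^ 2| ≤ M * ∫ x, u x ^ 2 := by
  rw [← MeasureTheory.integral_const_mul]
  exact integral_mono (h.integrable_mul_sq hw hM).abs (h.integrable_sq.const_mul M)
    fun x => by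
      rw [abs_mul, abs_sq]
      exact mul_le_mul_of_nonneg_right (hM x) (sq_nonneg (u x))

end BoundedWeight

theorem integrable_cube (h : DecayingProfile u v) : Integrable fun x => u x ^ 3 := by
  simpa only [pow_succ' _ 2] using h.integrable_mul_sq h.continuous h.abs_le_size

theorem energy_eq (h : DecayingProfile u v) (γ : ℝ) :
    energy γ u v = γ * (∫ x, v x ^ 2) + 1 / 3 * ∫ x, u x ^ 3 := by
  rw [energy, MeasureTheory.integral_add (h.integrable_primitive_sq.const_mul γ)
    (h.integrable_cube.const_mul (1 / 3)), MeasureTheory.integral_const_mul,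
    MeasureTheory.integral_const_mul]

theorem abs_integral_cube_le (h : DecayingProfile u v) (hM : ∀ x, |u x| ≤ M) :
    |∫ x, u x ^ 3| ≤ M * ∫ x, u x ^ 2 := by
  simp only [pow_succ' _ 2]
  exact MeasureTheory.abs_integral_le_integral_abs.trans (h.integral_abs_mul_sq_le h.continuous hM)

theorem energy_le_of_size_le {γ N : ℝ} (hγ : 0 < γ) (h : DecayingProfile u v)
    (hN : size u v ≤ N) : energy γ u v ≤ γ * N + N ^ 2 / 3 := by
  have hcube := (le_abs_self _).trans
    (h.abs_integral_cube_le fun x => (h.abs_le_size x).trans hN)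
  have hu := h.integral_sq_le_size.trans hN
  have hv := h.integral_primitive_sq_le_size.trans hN
  have hN0 : 0 ≤ N := (abs_nonneg (u 0)).trans ((h.abs_le_size 0).trans hN)
  rw [h.energy_eq]
  nlinarith [mul_le_mul_of_nonneg_left hu hN0, mul_le_mul_of_nonneg_left hv hγ.le]

theorem mul_integral_primitive_sq_le {γ q e : ℝ} (h : DecayingProfile u v)
    (hM : ∀ x, |u x| ≤ M) (hq : ∫ x, u x ^ 2 ≤ q) (he : energy γ u v ≤ e) :
    γ * ∫ x, v x ^ 2 ≤ e + M * q / 3 := by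
  have hcube := (neg_le_abs _).trans (h.abs_integral_cube_le hM)
  have hM0 : 0 ≤ M := (abs_nonneg (u 0)).trans (hM 0)
  rw [h.energy_eq] at he
  linarith [mul_le_mul_of_nonneg_left hq hM0]

theorem mul_abs_primitive_le {γ q e : ℝ} (hγ : 0 < γ) (h : DecayingProfile u v)
    (hM : ∀ x, |u x| ≤ M) (hq : ∫ x, u x ^ 2 ≤ q) (he : energy γ u v ≤ e) (x : ℝ) :
    γ * |v x| ≤ γ + γ * q + e + M * q / 3 := by
  have hv := h.mul_integral_primitive_sq_le hM hq he
  have hvx := h.primitive_sq_le x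
  rw [MeasureTheory.integral_add h.integrable_sq h.integrable_primitive_sq] at hvx
  have habs : |v x| ≤ 1 + v x ^ 2 := by
    rw [← sq_abs]
    nlinarith [sq_nonneg (|v x| - 1)]
  linarith [mul_le_mul_of_nonneg_left (habs.trans (by linarith :
    1 + v x ^ 2 ≤ 1 + (q + ∫ x, v x ^ 2))) hγ.le]

section Translation

variable (h : DecayingProfile u v)
include h

theorem comp_add_right (a : ℝ) :
    DecayingProfile (fun x => u (x + a)) (fun x => v (x + a)) where
  continuous := h.continuous.comp (continuous_add_const a)
  hasDerivAt x := (h.hasDerivAt (x + a)).comp_add_const x a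
  tendsto_zero := h.tendsto_zero.comp (Homeomorph.addRight a).isClosedEmbedding.tendsto_cocompact
  integrable_sq := h.integrable_sq.comp_add_right a
  integrable_primitive_sq := h.integrable_primitive_sq.comp_add_right a

theorem tendsto_primitive_add_left (x : ℝ) :
    Tendsto (fun a => v (x + a)) (cocompact ℝ) (𝓝 0) :=
  h.tendsto_primitive_zero.comp (Homeomorph.addLeft x).isClosedEmbedding.tendsto_cocompact

theorem intervalIntegral_comp_add_left (a x : ℝ) :
    ∫ y in 0..a, u (x + y) = v (x + a) - v x := by
  rw [integral_comp_add_left, add_zero]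
  exact integral_eq_sub_of_hasDerivAt (fun y _ => h.hasDerivAt y)
    (h.continuous.intervalIntegrable _ _)

theorem memLp_primitive : MemLp v 2 :=
  (memLp_two_iff_integrable_sq h.continuous_primitive.aestronglyMeasurable).2
    h.integrable_primitive_sq

theorem integrable_primitive_increment_sq (a : ℝ) :
    Integrable fun x => (v (x + a) - v x) ^ 2 :=
  ((h.comp_add_right a).memLp_primitive.sub h.memLp_primitive).integrable_sq

theorem integral_primitive_increment_sq (a : ℝ) :
    ∫ x, (v (x + a) - v x) ^ 2 = 2 * (∫ x, v x ^ 2) - 2 * ∫ x, v x * v (x + a) := by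
  have hmul : Integrable fun x => v x * v (x + a) :=
    h.memLp_primitive.integrable_mul (h.comp_add_right a).memLp_primitive
  calc ∫ x, (v (x + a) - v x) ^ 2
    _ = ∫ x, (v (x + a) ^ 2 + v x ^ 2 - 2 * (v x * v (x + a))) := by congr 1; ext x; ring
    _ = _ := by
      rw [MeasureTheory.integral_sub
          ((h.comp_add_right a).integrable_primitive_sq.fun_add h.integrable_primitive_sq)
          (hmul.const_mul 2),
        MeasureTheory.integral_add (h.comp_add_right a).integrable_primitive_sq
          h.integrable_primitive_sq, MeasureTheory.integral_const_mul,
        integral_add_right_eq_self fun x => v x ^ 2]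
      ring

theorem tendsto_integral_primitive_increment_sq :
    Tendsto (fun a => ∫ x, (v (x + a) - v x) ^ 2) atTop (𝓝 (2 * ∫ x, v x ^ 2)) := by
  have hcorr := tendsto_integral_mul_comp_add_right h.continuous_primitive h.continuous_primitive
    h.integrable_primitive_sq h.integrable_primitive_sq
    fun x => (h.tendsto_primitive_add_left x).mono_left atTop_le_cocompact
  simpa only [h.integral_primitive_increment_sq, mul_zero, sub_zero] using
    (hcorr.const_mul 2).const_sub (2 * ∫ x, v x ^ 2)

theorem hasDerivAt_intervalIntegral_primitive (a x : ℝ) :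
    HasDerivAt (fun x => ∫ y in 0..a, v (x + y)) (v (x + a) - v x) x := by
  have hint (b c : ℝ) : IntervalIntegrable v volume b c :=
    h.continuous_primitive.intervalIntegrable _ _
  have hFTC (x : ℝ) : HasDerivAt (fun x => ∫ y in 0..x, v y) (v x) x :=
    (h.continuous_primitive.integral_hasStrictDerivAt 0 x).hasDerivAt
  refine (((hFTC (x + a)).comp_add_const x a).sub (hFTC x)).congr_of_eventuallyEq
    (Eventually.of_forall fun x => ?_)
  simp [integral_comp_add_left, integral_interval_sub_left (hint 0 (x + a)) (hint 0 x)]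

theorem tendsto_intervalIntegral_primitive (hM : ∀ x, |v x| ≤ M) (a : ℝ) :
    Tendsto (fun x => ∫ y in 0..a, v (x + y)) (cocompact ℝ) (𝓝 0) := by
  suffices Tendsto (fun x => ∫ y in 0..a, v (x + y)) (cocompact ℝ) (𝓝 (∫ _ in 0..a, (0 : ℝ))) by
    simpa using this
  have hcont := h.continuous_primitive
  have := isCountablyGenerated_cocompact_real
  refine intervalIntegral.tendsto_integral_filter_of_dominated_convergence (fun _ => M)
    (Eventually.of_forall fun x => by fun_prop)
    (Eventually.of_forall fun x => Eventually.of_forall fun y _ => hM (x + y))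
    intervalIntegrable_const (Eventually.of_forall fun y _ => ?_)
  simpa only [add_comm] using h.tendsto_primitive_add_left y

theorem tendsto_integral_primitive_comp_add_mul_sq (hM : ∀ x, |v x| ≤ M) :
    Tendsto (fun a => ∫ x, v (x + a) * u x ^ 2) (cocompact ℝ) (𝓝 0) := by
  suffices Tendsto (fun a => ∫ x, v (x + a) * u x ^ 2) (cocompact ℝ) (𝓝 (∫ _ : ℝ, (0 : ℝ))) by
    simpa using this
  have hu := h.continuous
  have hv := h.continuous_primitive
  have := isCountablyGenerated_cocompact_real
  refine MeasureTheory.tendsto_integral_filter_of_dominated_convergence (fun x => M * u x ^ 2)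
    (Eventually.of_forall fun a => by fun_prop)
    (Eventually.of_forall fun a => Eventually.of_forall fun x => ?_)
    (h.integrable_sq.const_mul M) (Eventually.of_forall fun x => ?_)
  · rw [norm_mul, Real.norm_of_nonneg (sq_nonneg (u x))]
    exact mul_le_mul_of_nonneg_right (hM (x + a)) (sq_nonneg (u x))
  · simpa using (h.tendsto_primitive_add_left x).mul_const (u x ^ 2)

theorem integrable_increment_mul_increment_sq (hM : ∀ x, |v x| ≤ M) (a : ℝ) :
    Integrable (fun x => (v (x + a) - v x) * (u (x + a) ^ 2 - u x ^ 2)) ∧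
      ∫ x, |(v (x + a) - v x) * (u (x + a) ^ 2 - u x ^ 2)| ≤ 4 * M * ∫ x, u x ^ 2 := by
  have hw : Continuous fun x => v (x + a) - v x :=
    (h.comp_add_right a).continuous_primitive.sub h.continuous_primitive
  have hw2 (x : ℝ) : |v (x + a) - v x| ≤ M + M :=
    (abs_sub _ _).trans (add_le_add (hM (x + a)) (hM x))
  have hi := h.integrable_mul_sq hw hw2
  have hia := (h.comp_add_right a).integrable_mul_sq hw hw2
  have hle := h.integral_abs_mul_sq_le hw hw2
  have hlea := (h.comp_add_right a).integral_abs_mul_sq_le hw hw2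
  rw [integral_add_right_eq_self fun x => u x ^ 2] at hlea
  simp only [mul_sub (v (_ + a) - v _)]
  refine ⟨hia.sub hi, (integral_mono (hia.sub hi).abs (hia.abs.add hi.abs)
    fun x => abs_sub _ _).trans ?_⟩
  rw [Pi.add_def, MeasureTheory.integral_add hia.abs hi.abs]
  linarith

theorem integral_increment_mul_increment_sq (hM : ∀ x, |v x| ≤ M) (a : ℝ) :
    ∫ x, (v (x + a) - v x) * (u (x + a) ^ 2 - u x ^ 2) = 2 * (∫ x, v x * u x ^ 2) -
      ((∫ x, v (x + a) * u x ^ 2) + ∫ x, v (x + -a) * u x ^ 2) := by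
  have hv := h.continuous_primitive
  have hi (b : ℝ) : Integrable fun x => v (x + b) * u x ^ 2 :=
    h.integrable_mul_sq (by fun_prop) fun x => hM (x + b)
  have hi0 : Integrable fun x => v x * u x ^ 2 := by simpa using hi 0
  have hneg : Integrable fun x => v x * u (x + a) ^ 2 := by
    simpa using (hi (-a)).comp_add_right a
  have hshift : ∫ x, v x * u (x + a) ^ 2 = ∫ x, v (x + -a) * u x ^ 2 := by
    simpa using integral_add_right_eq_self (fun x => v (x + -a) * u x ^ 2) a
  calc ∫ x, (v (x + a) - v x) * (u (x + a) ^ 2 - u x ^ 2)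
    _ = ∫ x, ((v (x + a) * u (x + a) ^ 2 + v x * u x ^ 2) -
          (v (x + a) * u x ^ 2 + v x * u (x + a) ^ 2)) := by congr 1; ext x; ring
    _ = _ := by
      rw [MeasureTheory.integral_sub ((hi0.comp_add_right a).fun_add hi0) ((hi a).fun_add hneg),
        MeasureTheory.integral_add (hi0.comp_add_right a) hi0,
        MeasureTheory.integral_add (hi a) hneg, hshift,
        integral_add_right_eq_self fun x => v x * u x ^ 2]
      ring

theorem tendsto_integral_increment_mul_increment_sq (hM : ∀ x, |v x| ≤ M) :
    Tendsto (fun a => ∫ x, (v (x + a) - v x) * (u (x + a) ^ 2 - u x ^ 2)) atTop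
      (𝓝 (2 * ∫ x, v x * u x ^ 2)) := by
  have hlim := h.tendsto_integral_primitive_comp_add_mul_sq hM
  simp only [h.integral_increment_mul_increment_sq hM]
  simpa using ((hlim.mono_left atTop_le_cocompact).add
    ((hlim.mono_left atBot_le_cocompact).comp tendsto_neg_atTop_atBot)).const_sub
      (2 * ∫ x, v x * u x ^ 2)

end Translation

end DecayingProfile

/-- A solution of `u_t + u u_x = γ v`, `v_x = u`, on the slab `s ≤ τ ≤ t`, with decaying profiles at
every time including the endpoints; `ut` and `ux` stand for the partial derivatives. The equation is
only imposed in the interior, where it also transfers joint continuity to `v`. -/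
structure SlabSolution (γ s t : ℝ) (u ut ux v : ℝ → ℝ → ℝ) : Prop where
  continuousOn : ContinuousOn (Function.uncurry u) (Icc s t ×ˢ univ)
  continuousOn_ut : ContinuousOn (Function.uncurry ut) (Icc s t ×ˢ univ)
  continuousOn_ux : ContinuousOn (Function.uncurry ux) (Icc s t ×ˢ univ)
  hasDerivAt_ut : ∀ τ ∈ Ioo s t, ∀ x, HasDerivAt (fun σ => u σ x) (ut τ x) τ
  hasDerivAt_ux : ∀ τ ∈ Ioo s t, ∀ x, HasDerivAt (u τ) (ux τ x) x
  profile : ∀ τ ∈ Icc s t, DecayingProfile (u τ) (v τ)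
  eqn : ∀ τ ∈ Ioo s t, ∀ x, ut τ x + u τ x * ux τ x = γ * v τ x

namespace SlabSolution

variable {γ s t C : ℝ} {u ut ux v : ℝ → ℝ → ℝ}

theorem mono (h : SlabSolution γ s t u ut ux v) {a b : ℝ} (ha : s ≤ a) (hb : b ≤ t) :
    SlabSolution γ a b u ut ux v := by
  have hIcc : Icc a b ×ˢ univ ⊆ Icc s t ×ˢ (univ : Set ℝ) :=
    prod_mono_left (Icc_subset_Icc ha hb)
  have hIoo : Ioo a b ⊆ Ioo s t := Ioo_subset_Ioo ha hb
  exact ⟨h.continuousOn.mono hIcc, h.continuousOn_ut.mono hIcc, h.continuousOn_ux.mono hIcc,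
    fun τ hτ => h.hasDerivAt_ut τ (hIoo hτ), fun τ hτ => h.hasDerivAt_ux τ (hIoo hτ),
    fun τ hτ => h.profile τ (Icc_subset_Icc ha hb hτ), fun τ hτ => h.eqn τ (hIoo hτ)⟩

theorem reverse (h : SlabSolution γ s t u ut ux v) :
    SlabSolution γ (-t) (-s) (fun τ x => u (-τ) (-x)) (fun τ x => -ut (-τ) (-x))
      (fun τ x => -ux (-τ) (-x)) (fun τ x => -v (-τ) (-x)) := by
  have hIcc {τ : ℝ} (hτ : τ ∈ Icc (-t) (-s)) : -τ ∈ Icc s t :=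
    ⟨le_neg.1 hτ.2, neg_le.1 hτ.1⟩
  have hIoo {τ : ℝ} (hτ : τ ∈ Ioo (-t) (-s)) : -τ ∈ Ioo s t :=
    ⟨lt_neg.1 hτ.2, neg_lt.1 hτ.1⟩
  have hcomp {f : ℝ → ℝ → ℝ} (hf : ContinuousOn (Function.uncurry f) (Icc s t ×ˢ univ)) :
      ContinuousOn (fun p : ℝ × ℝ => f (-p.1) (-p.2)) (Icc (-t) (-s) ×ˢ univ) :=
    hf.comp (f := fun p : ℝ × ℝ => (-p.1, -p.2)) (by fun_prop)
      fun p hp => ⟨hIcc hp.1, mem_univ _⟩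
  refine ⟨hcomp h.continuousOn, (hcomp h.continuousOn_ut).neg, (hcomp h.continuousOn_ux).neg,
    fun τ hτ x => ?_, fun τ hτ x => ?_, fun τ hτ => (h.profile _ (hIcc hτ)).comp_neg,
    fun τ hτ x => ?_⟩
  · simpa [Function.comp_def] using
      (h.hasDerivAt_ut (-τ) (hIoo hτ) (-x)).comp τ (hasDerivAt_neg τ)
  · simpa [Function.comp_def] using
      (h.hasDerivAt_ux (-τ) (hIoo hτ) (-x)).comp x (hasDerivAt_neg x)
  · linear_combination -h.eqn (-τ) (hIoo hτ) (-x)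

theorem continuousOn_time (h : SlabSolution γ s t u ut ux v) (x : ℝ) :
    ContinuousOn (fun τ => u τ x) (Icc s t) :=
  continuousOn_of_continuousOn_uncurry h.continuousOn x

theorem hasDerivAt_sq (h : SlabSolution γ s t u ut ux v) {τ : ℝ} (hτ : τ ∈ Ioo s t) (x : ℝ) :
    HasDerivAt (fun x => u τ x ^ 2) (2 * u τ x * ux τ x) x := by
  simpa using (h.hasDerivAt_ux τ hτ x).fun_pow 2

section Window

variable (h : SlabSolution γ s t u ut ux v)
include h

theorem intervalIntegral_ut_comp_add_left {τ : ℝ} (hτ : τ ∈ Ioo s t) (a x : ℝ) :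
    ∫ y in 0..a, ut τ (x + y) =
      γ * (∫ y in 0..a, v τ (x + y)) - (u τ (x + a) ^ 2 - u τ x ^ 2) / 2 := by
  have hτ' := Ioo_subset_Icc_self hτ
  have hv := (h.profile τ hτ').continuous_primitive
  have hut : Continuous (ut τ) := continuous_of_continuousOn_uncurry h.continuousOn_ut hτ'
  have hint : IntervalIntegrable (fun y => ut τ (x + y) - γ * v τ (x + y)) volume 0 a :=
    Continuous.intervalIntegrable (by fun_prop) _ _
  have hftc := integral_eq_sub_of_hasDerivAt (f := fun y => -u τ (x + y) ^ 2 / 2)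
    (fun y _ => ((((h.hasDerivAt_sq hτ (x + y)).comp_const_add x y).fun_neg.div_const 2).congr_deriv
      (by linear_combination -h.eqn τ hτ (x + y)))) hint
  rw [intervalIntegral.integral_sub (Continuous.intervalIntegrable (by fun_prop) _ _)
    (Continuous.intervalIntegrable (by fun_prop) _ _), intervalIntegral.integral_const_mul,
    add_zero] at hftc
  linear_combination hftc

theorem hasDerivAt_window_density {τ : ℝ} (hτ : τ ∈ Ioo s t) (a x : ℝ) :
    HasDerivAt (fun σ => (∫ y in 0..a, u σ (x + y)) ^ 2)
      (2 * (∫ y in 0..a, u τ (x + y)) * ∫ y in 0..a, ut τ (x + y)) τ := by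
  have hshift {f : ℝ → ℝ → ℝ} (hf : ContinuousOn (Function.uncurry f) (Icc s t ×ˢ univ)) :
      ContinuousOn (Function.uncurry fun σ y => f σ (x + y)) (Icc s t ×ˢ univ) :=
    hf.comp (f := fun p : ℝ × ℝ => (p.1, x + p.2)) (by fun_prop) fun p hp => ⟨hp.1, mem_univ _⟩
  simpa using (hasDerivAt_parametric_intervalIntegral (hshift h.continuousOn)
    (hshift h.continuousOn_ut) (fun σ hσ y => h.hasDerivAt_ut σ hσ (x + y)) hτ 0 a).fun_pow 2

theorem hasDerivAt_window_flux {τ : ℝ} (hτ : τ ∈ Ioo s t) (a x : ℝ) :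
    HasDerivAt (fun x => γ * (∫ y in 0..a, v τ (x + y)) ^ 2)
      (2 * (∫ y in 0..a, u τ (x + y)) * (∫ y in 0..a, ut τ (x + y)) -
        -((v τ (x + a) - v τ x) * (u τ (x + a) ^ 2 - u τ x ^ 2))) x := by
  have hprofile := h.profile τ (Ioo_subset_Icc_self hτ)
  refine (((hprofile.hasDerivAt_intervalIntegral_primitive a x).fun_pow 2).const_mul
    γ).congr_deriv ?_
  rw [h.intervalIntegral_ut_comp_add_left hτ, hprofile.intervalIntegral_comp_add_left]
  push_cast
  ring

end Window

section BoundedSize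

variable (h : SlabSolution γ s t u ut ux v) (hst : s ≤ t)
  (hC : ∀ τ ∈ Ioo s t, size (u τ) (v τ) ≤ C)
include h hC

theorem abs_le_of_size_le {τ : ℝ} (hτ : τ ∈ Ioo s t) (x : ℝ) : |u τ x| ≤ C :=
  ((h.profile τ (Ioo_subset_Icc_self hτ)).abs_le_size x).trans (hC τ hτ)

theorem abs_primitive_le_of_size_le {τ : ℝ} (hτ : τ ∈ Ioo s t) (x : ℝ) : |v τ x| ≤ √C :=
  Real.abs_le_sqrt (((h.profile τ (Ioo_subset_Icc_self hτ)).primitive_sq_le_size x).trans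
    (hC τ hτ))

theorem integral_sq_le_of_size_le {τ : ℝ} (hτ : τ ∈ Ioo s t) : ∫ x, u τ x ^ 2 ≤ C :=
  (h.profile τ (Ioo_subset_Icc_self hτ)).integral_sq_le_size.trans (hC τ hτ)

include hst

theorem integral_sq_eq_of_size_le : ∫ x, u t x ^ 2 = ∫ x, u s x ^ 2 := by
  have hprofile (τ) (hτ : τ ∈ Ioo s t) := h.profile τ (Ioo_subset_Icc_self hτ)
  have hbal := (intervalIntegrable_integral_source_and_integral_sub_eq
    (f := fun τ x => u τ x ^ 2) (p := fun τ x => 2 * u τ x * ut τ x)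
    (F := fun τ x => γ * v τ x ^ 2 - 2 / 3 * u τ x ^ 3) (g := fun _ _ => 0)
    (C := |γ| * C + 2 / 3 * C ^ 3) (K := 0) hst
    (fun x => (h.continuousOn_time x).pow 2)
    (fun τ hτ x => by simpa using (h.hasDerivAt_ut τ hτ x).fun_pow 2)
    ((continuousOn_const.mul h.continuousOn).mul h.continuousOn_ut)
    (fun τ hτ x => ?_) (fun τ hτ => ?_) (fun τ hτ x => ?_) (by simp) (by simp)
    (h.profile s (left_mem_Icc.2 hst)).integrable_sq
    (h.profile t (right_mem_Icc.2 hst)).integrable_sq).2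
  · simpa [sub_eq_zero] using hbal
  · refine ((((hprofile τ hτ).hasDerivAt_primitive_sq x).const_mul γ).sub
      (((h.hasDerivAt_ux τ hτ x).fun_pow 3).const_mul (2 / 3))).congr_deriv ?_
    push_cast
    linear_combination -2 * u τ x * h.eqn τ hτ x
  · simpa using (((hprofile τ hτ).tendsto_primitive_zero.pow 2).const_mul γ).sub
      (((hprofile τ hτ).tendsto_zero.pow 3).const_mul (2 / 3))
  · refine (abs_sub _ _).trans (add_le_add ?_ ?_)
    · rw [abs_mul, abs_sq]
      exact mul_le_mul_of_nonneg_left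
        (((hprofile τ hτ).primitive_sq_le_size x).trans (hC τ hτ)) (abs_nonneg γ)
    · rw [abs_mul, abs_pow, abs_of_pos (by norm_num : (0 : ℝ) < 2 / 3)]
      gcongr
      exact h.abs_le_of_size_le hC hτ x

theorem integral_cube_sub_eq :
    (∫ x, u t x ^ 3) - ∫ x, u s x ^ 3 = ∫ τ in s..t, ∫ x, 3 * γ * v τ x * u τ x ^ 2 := by
  have hprofile (τ) (hτ : τ ∈ Ioo s t) := h.profile τ (Ioo_subset_Icc_self hτ)
  have hweight (τ) (hτ : τ ∈ Ioo s t) : Continuous fun x => 3 * γ * v τ x :=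
    continuous_const.mul (hprofile τ hτ).continuous_primitive
  have hweight_le (τ) (hτ : τ ∈ Ioo s t) (x : ℝ) : |3 * γ * v τ x| ≤ |3 * γ| * √C := by
    rw [abs_mul]
    gcongr
    exact h.abs_primitive_le_of_size_le hC hτ x
  refine (intervalIntegrable_integral_source_and_integral_sub_eq
    (p := fun τ x => 3 * u τ x ^ 2 * ut τ x) (F := fun τ x => -(3 / 4) * u τ x ^ 4)
    (C := 3 / 4 * C ^ 4) (K := |3 * γ| * √C * C) hst
    (fun x => (h.continuousOn_time x).pow 3)
    (fun τ hτ x => by simpa using (h.hasDerivAt_ut τ hτ x).fun_pow 3)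
    ((continuousOn_const.fun_mul (h.continuousOn.fun_pow 2)).fun_mul h.continuousOn_ut)
    (fun τ hτ x => ?_) (fun τ hτ => ?_) (fun τ hτ x => ?_)
    (fun τ hτ => (hprofile τ hτ).integrable_mul_sq (hweight τ hτ) (hweight_le τ hτ))
    (fun τ hτ => ((hprofile τ hτ).integral_abs_mul_sq_le (hweight τ hτ) (hweight_le τ hτ)).trans
      (mul_le_mul_of_nonneg_left (h.integral_sq_le_of_size_le hC hτ) (by positivity)))
    (h.profile s (left_mem_Icc.2 hst)).integrable_cube
    (h.profile t (right_mem_Icc.2 hst)).integrable_cube).2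
  · refine (((h.hasDerivAt_ux τ hτ x).fun_pow 4).const_mul (-(3 / 4))).congr_deriv ?_
    push_cast
    linear_combination -3 * u τ x ^ 2 * h.eqn τ hτ x
  · simpa using ((hprofile τ hτ).tendsto_zero.pow 4).const_mul (-(3 / 4))
  · rw [abs_mul, abs_pow, abs_neg, abs_of_pos (by norm_num : (0 : ℝ) < 3 / 4)]
    gcongr
    exact h.abs_le_of_size_le hC hτ x

theorem intervalIntegrable_and_integral_window_sub_eq (a : ℝ) :
    IntervalIntegrable (fun τ => ∫ x, -((v τ (x + a) - v τ x) * (u τ (x + a) ^ 2 - u τ x ^ 2)))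
        volume s t ∧
      (∫ x, (v t (x + a) - v t x) ^ 2) - ∫ x, (v s (x + a) - v s x) ^ 2 =
        ∫ τ in s..t, ∫ x, -((v τ (x + a) - v τ x) * (u τ (x + a) ^ 2 - u τ x ^ 2)) := by
  have hprofile (τ) (hτ : τ ∈ Ioo s t) := h.profile τ (Ioo_subset_Icc_self hτ)
  have hs := h.profile s (left_mem_Icc.2 hst)
  have ht := h.profile t (right_mem_Icc.2 hst)
  have hv (τ) (hτ : τ ∈ Ioo s t) := h.abs_primitive_le_of_size_le hC hτ
  have hdensity := continuousOn_intervalIntegral_comp_add_left h.continuousOn 0 a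
  simp only [← hs.intervalIntegral_comp_add_left, ← ht.intervalIntegral_comp_add_left]
  refine intervalIntegrable_integral_source_and_integral_sub_eq
    (f := fun τ x => (∫ y in 0..a, u τ (x + y)) ^ 2)
    (F := fun τ x => γ * (∫ y in 0..a, v τ (x + y)) ^ 2)
    (C := |γ| * (√C * |a|) ^ 2) (K := 4 * √C * C) hst
    (fun x => (continuousOn_of_continuousOn_uncurry
      (f := fun τ x => ∫ y in 0..a, u τ (x + y)) hdensity x).pow 2)
    (fun τ hτ x => h.hasDerivAt_window_density hτ a x)
    ((continuousOn_const.fun_mul hdensity).fun_mul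
      (continuousOn_intervalIntegral_comp_add_left h.continuousOn_ut 0 a))
    (fun τ hτ x => h.hasDerivAt_window_flux hτ a x) (fun τ hτ => ?_) (fun τ hτ x => ?_)
    (fun τ hτ => ((hprofile τ hτ).integrable_increment_mul_increment_sq (hv τ hτ) a).1.neg)
    (fun τ hτ => ?_)
    (by simpa only [hs.intervalIntegral_comp_add_left] using hs.integrable_primitive_increment_sq a)
    (by simpa only [ht.intervalIntegral_comp_add_left] using ht.integrable_primitive_increment_sq a)
  · simpa using (((hprofile τ hτ).tendsto_intervalIntegral_primitive (hv τ hτ) a).pow 2).const_mul γ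
  · rw [abs_mul, abs_pow]
    gcongr
    simpa using norm_integral_le_of_norm_le_const (a := 0) (b := a) (f := fun y => v τ (x + y))
      fun y _ => hv τ hτ (x + y)
  · simp only [abs_neg]
    exact ((hprofile τ hτ).integrable_increment_mul_increment_sq (hv τ hτ) a).2.trans
      (mul_le_mul_of_nonneg_left (h.integral_sq_le_of_size_le hC hτ) (by positivity))

/-- Letting the width of the window tend to infinity decorrelates its two ends. -/
theorem integral_primitive_sq_sub_eq :
    2 * (∫ x, v t x ^ 2) - 2 * ∫ x, v s x ^ 2 =
      ∫ τ in s..t, -(2 * ∫ x, v τ x * u τ x ^ 2) := by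
  have hprofile (τ) (hτ : τ ∈ Ioo s t) := h.profile τ (Ioo_subset_Icc_self hτ)
  have hv (τ) (hτ : τ ∈ Ioo s t) := h.abs_primitive_le_of_size_le hC hτ
  have hwindow := h.intervalIntegrable_and_integral_window_sub_eq hst hC
  have hleft := (h.profile t (right_mem_Icc.2 hst)).tendsto_integral_primitive_increment_sq.sub
    (h.profile s (left_mem_Icc.2 hst)).tendsto_integral_primitive_increment_sq
  simp only [fun a => (hwindow a).2] at hleft
  refine tendsto_nhds_unique hleft
    (intervalIntegrable_and_tendsto_intervalIntegral_of_bounded (C := 4 * √C * C) hst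
      (fun a => ?_) (fun a τ hτ => ?_) fun τ hτ => ?_).2
  · exact ((intervalIntegrable_iff_integrableOn_Ioo_of_le hst).1 (hwindow a).1).aestronglyMeasurable
  · rw [MeasureTheory.integral_neg, norm_neg]
    exact (MeasureTheory.norm_integral_le_integral_norm _).trans <|
      ((hprofile τ hτ).integrable_increment_mul_increment_sq (hv τ hτ) a).2.trans
        (mul_le_mul_of_nonneg_left (h.integral_sq_le_of_size_le hC hτ) (by positivity))
  · simpa only [MeasureTheory.integral_neg] using
      ((hprofile τ hτ).tendsto_integral_increment_mul_increment_sq (hv τ hτ)).neg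

theorem energy_eq_of_size_le : energy γ (u t) (v t) = energy γ (u s) (v s) := by
  have hprimitive := h.integral_primitive_sq_sub_eq hst hC
  have hcube := h.integral_cube_sub_eq hst hC
  simp only [mul_assoc (3 * γ), MeasureTheory.integral_const_mul,
    intervalIntegral.integral_const_mul] at hcube
  simp only [intervalIntegral.integral_neg, intervalIntegral.integral_const_mul] at hprimitive
  rw [(h.profile s (left_mem_Icc.2 hst)).energy_eq, (h.profile t (right_mem_Icc.2 hst)).energy_eq]
  linear_combination γ / 2 * hprimitive + 1 / 3 * hcube

end BoundedSize

end SlabSolution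

/-- The bound on `‖u‖_∞` over a short time, starting from size at most `N`. Along characteristics
`|u|` grows at rate at most `γ |v| ≤ γ + γ N + e + M q / 3`, where `M` is the supremum of `|u|` on
the slab, `q = ‖u‖₂²` and `e = γ N + N² / 3` bounds the energy; over a time at most `1 / q` the last
term contributes at most `M / 3`, which is absorbed. -/
noncomputable def supBound (γ N : ℝ) : ℝ := 3 / 2 * (N + (γ + γ * N + (γ * N + N ^ 2 / 3)))

/-- The bound on the size over a short time, starting from size at most `N`: conservation of the
energy turns the bound on `‖u‖_∞` into a bound on `‖v‖₂`. -/
noncomputable def sizeBound (γ N : ℝ) : ℝ :=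
  supBound γ N + (N + (γ * N + N ^ 2 / 3 + supBound γ N * N / 3) / γ)

theorem size_comp_neg (u v : ℝ → ℝ) : size (fun x => u (-x)) (fun x => -v (-x)) = size u v := by
  have hsup : ⨆ x, |u (-x)| = ⨆ x, |u x| := (Equiv.neg ℝ).iSup_comp (g := fun x => |u x|)
  have hint := integral_neg_eq_self (fun x => u x ^ 2 + v x ^ 2) volume
  simp only [size, hsup, neg_sq, hint]

theorem DecayingProfile.size_le_sizeBound {γ N : ℝ} {u v : ℝ → ℝ} (h : DecayingProfile u v)
    (hγ : 0 < γ) (hM : ∀ x, |u x| ≤ supBound γ N) (hq : ∫ x, u x ^ 2 ≤ N)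
    (he : energy γ u v ≤ γ * N + N ^ 2 / 3) : size u v ≤ sizeBound γ N := by
  rw [size, MeasureTheory.integral_add h.integrable_sq h.integrable_primitive_sq]
  refine add_le_add (ciSup_le hM) (add_le_add hq ?_)
  rw [le_div_iff₀' hγ]
  exact h.mul_integral_primitive_sq_le hM hq he

namespace SlabSolution

variable {γ s t C N : ℝ} {u ut ux v : ℝ → ℝ → ℝ}

theorem integral_sq_eq_and_energy_eq (h : SlabSolution γ s t u ut ux v)
    (hC : ∀ τ ∈ Icc s t, size (u τ) (v τ) ≤ C) {τ : ℝ} (hτ : τ ∈ Icc s t) :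
    ∫ x, u τ x ^ 2 = ∫ x, u s x ^ 2 ∧ energy γ (u τ) (v τ) = energy γ (u s) (v s) := by
  have hCτ (σ) (hσ : σ ∈ Ioo s τ) : size (u σ) (v σ) ≤ C := hC σ ⟨hσ.1.le, hσ.2.le.trans hτ.2⟩
  have hτ' := h.mono le_rfl hτ.2
  exact ⟨hτ'.integral_sq_eq_of_size_le hτ.1 hCτ, hτ'.energy_eq_of_size_le hτ.1 hCτ⟩

theorem abs_le_add_of_abs_le {M q e : ℝ} (h : SlabSolution γ s t u ut ux v) (hγ : 0 < γ)
    (hst : s ≤ t) (hM : ∀ τ ∈ Icc s t, ∀ x, |u τ x| ≤ M)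
    (hq : ∀ τ ∈ Icc s t, ∫ x, u τ x ^ 2 ≤ q) (he : ∀ τ ∈ Icc s t, energy γ (u τ) (v τ) ≤ e)
    (hN : ∀ x, |u s x| ≤ N) (x : ℝ) :
    |u t x| ≤ N + (γ + γ * q + e + M * q / 3) * (t - s) := by
  have hM' (τ) (hτ : τ ∈ Ioo s t) := hM τ (Ioo_subset_Icc_self hτ)
  have hforce (τ) (hτ : τ ∈ Ioo s t) (x : ℝ) : |γ * v τ x| ≤ γ + γ * q + e + M * q / 3 := by
    have hτ' := Ioo_subset_Icc_self hτ
    rw [abs_mul, abs_of_pos hγ]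
    exact (h.profile τ hτ').mul_abs_primitive_le hγ (hM τ hτ') (hq τ hτ') (he τ hτ') x
  refine abs_le'.2 ⟨?_, ?_⟩
  · exact le_add_of_transport_le hst h.continuousOn h.hasDerivAt_ut h.hasDerivAt_ux
      (fun τ hτ x => (h.eqn τ hτ x).trans_le ((le_abs_self _).trans (hforce τ hτ x))) hM'
      (fun τ hτ x => (le_abs_self _).trans (hM τ hτ x)) (fun x => (le_abs_self _).trans (hN x)) x
  · refine le_add_of_transport_le (y := fun τ x => -u τ x) hst h.continuousOn.neg
      (fun τ hτ x => (h.hasDerivAt_ut τ hτ x).fun_neg)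
      (fun τ hτ x => (h.hasDerivAt_ux τ hτ x).fun_neg) (fun τ hτ x => ?_) hM'
      (fun τ hτ x => (neg_le_abs _).trans (hM τ hτ x)) (fun x => (neg_le_abs _).trans (hN x)) x
    linarith [h.eqn τ hτ x, neg_le_abs (γ * v τ x), hforce τ hτ x]

theorem abs_le_supBound (h : SlabSolution γ s t u ut ux v) (hγ : 0 < γ) (hst : s ≤ t)
    (hC : ∀ τ ∈ Icc s t, size (u τ) (v τ) ≤ C) (hlen : t - s ≤ 1)
    (hqlen : (∫ x, u s x ^ 2) * (t - s) ≤ 1) (hN : size (u s) (v s) ≤ N) (x : ℝ) :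
    |u t x| ≤ supBound γ N := by
  have hprofile := h.profile s (left_mem_Icc.2 hst)
  set q := ∫ x, u s x ^ 2
  have hqN : q ≤ N := hprofile.integral_sq_le_size.trans hN
  have hq0 : 0 ≤ q := integral_nonneg fun x => sq_nonneg (u s x)
  have hs (x : ℝ) : |u s x| ≤ N := (hprofile.abs_le_size x).trans hN
  have hcons (τ) (hτ : τ ∈ Icc s t) := h.integral_sq_eq_and_energy_eq hC hτ
  set M := ⨆ p : Icc s t × ℝ, |u p.1 p.2|
  have hM (τ) (hτ : τ ∈ Icc s t) (x : ℝ) : |u τ x| ≤ M :=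
    le_ciSup (f := fun p : Icc s t × ℝ => |u p.1 p.2|)
      ⟨C, forall_mem_range.2 fun p => ((h.profile _ p.1.2).abs_le_size _).trans (hC _ p.1.2)⟩
      (⟨τ, hτ⟩, x)
  have hM0 : 0 ≤ M := Real.iSup_nonneg fun p => abs_nonneg _
  have hgrowth (τ) (hτ : τ ∈ Icc s t) (x : ℝ) :
      |u τ x| ≤ N + (γ + γ * q + (γ * N + N ^ 2 / 3) + M * q / 3) * (τ - s) := by
    have hsub (σ) (hσ : σ ∈ Icc s τ) : σ ∈ Icc s t := ⟨hσ.1, hσ.2.trans hτ.2⟩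
    exact (h.mono le_rfl hτ.2).abs_le_add_of_abs_le hγ hτ.1 (fun σ hσ => hM σ (hsub σ hσ))
      (fun σ hσ => (hcons σ (hsub σ hσ)).1.le) (fun σ hσ => (hcons σ (hsub σ hσ)).2.trans_le
        (hprofile.energy_le_of_size_le hγ hN)) hs x
  have habsorb : M ≤ N + (γ + γ * N + (γ * N + N ^ 2 / 3)) + M / 3 := by
    have : Nonempty (Icc s t × ℝ) := ⟨(⟨s, left_mem_Icc.2 hst⟩, 0)⟩
    refine ciSup_le fun ⟨⟨τ, hτ⟩, x⟩ => (hgrowth τ hτ x).trans ?_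
    have hτ1 : τ - s ≤ 1 := by linarith [hτ.2]
    have hqτ : q * (τ - s) ≤ 1 :=
      (mul_le_mul_of_nonneg_left (sub_le_sub_right hτ.2 s) hq0).trans hqlen
    have hN0 : 0 ≤ N := hq0.trans hqN
    nlinarith [mul_le_mul_of_nonneg_left hqτ hM0, mul_le_mul_of_nonneg_left hqN hγ.le,
      mul_le_mul_of_nonneg_left hτ1 (by positivity : 0 ≤ γ + γ * q + (γ * N + N ^ 2 / 3))]
  have := hM t (right_mem_Icc.2 hst) x
  rw [supBound]
  linarith

theorem size_right_le (h : SlabSolution γ s t u ut ux v) (hγ : 0 < γ) (hst : s ≤ t)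
    (hC : ∀ τ ∈ Icc s t, size (u τ) (v τ) ≤ C) (hlen : t - s ≤ 1)
    (hqlen : (∫ x, u s x ^ 2) * (t - s) ≤ 1) (hN : size (u s) (v s) ≤ N) :
    size (u t) (v t) ≤ sizeBound γ N := by
  have hs := h.profile s (left_mem_Icc.2 hst)
  obtain ⟨hQ, hE⟩ := h.integral_sq_eq_and_energy_eq hC (right_mem_Icc.2 hst)
  exact (h.profile t (right_mem_Icc.2 hst)).size_le_sizeBound hγ
    (h.abs_le_supBound hγ hst hC hlen hqlen hN) (hQ.trans_le (hs.integral_sq_le_size.trans hN))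
    (hE.trans_le (hs.energy_le_of_size_le hγ hN))

theorem size_left_le (h : SlabSolution γ s t u ut ux v) (hγ : 0 < γ) (hst : s ≤ t)
    (hC : ∀ τ ∈ Icc s t, size (u τ) (v τ) ≤ C) (hlen : t - s ≤ 1)
    (hqlen : (∫ x, u t x ^ 2) * (t - s) ≤ 1) (hN : size (u t) (v t) ≤ N) :
    size (u s) (v s) ≤ sizeBound γ N := by
  have hQ : ∫ x, u t (-x) ^ 2 = ∫ x, u t x ^ 2 := integral_neg_eq_self (fun x => u t x ^ 2) volume
  have hrev := h.reverse.size_right_le (C := C) (N := N) hγ (neg_le_neg hst)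
    (fun τ hτ => by
      rw [size_comp_neg]
      exact hC _ ⟨le_neg.1 hτ.2, neg_le.1 hτ.1⟩)
    (by linarith) (by simpa only [neg_neg, hQ, neg_sub_neg] using hqlen)
    (by simpa only [neg_neg, size_comp_neg] using hN)
  simpa only [neg_neg, size_comp_neg] using hrev

theorem continuousOn_uncurry_primitive (h : SlabSolution γ s t u ut ux v) (hγ : 0 < γ) :
    ContinuousOn (Function.uncurry v) (Ioo s t ×ˢ univ) := by
  have hsub : Ioo s t ×ˢ univ ⊆ Icc s t ×ˢ (univ : Set ℝ) := prod_mono_left Ioo_subset_Icc_self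
  refine ContinuousOn.congr (((h.continuousOn_ut.mono hsub).add
    ((h.continuousOn.mono hsub).mul (h.continuousOn_ux.mono hsub))).div_const γ) fun p hp => ?_
  exact eq_div_of_mul_eq hγ.ne' ((mul_comm _ _).trans (h.eqn p.1 hp.1 p.2).symm)

theorem lowerSemicontinuousOn_size (h : SlabSolution γ s t u ut ux v) (hγ : 0 < γ) :
    LowerSemicontinuousOn (fun τ => size (u τ) (v τ)) (Ioo s t) := by
  have hprofile (τ) (hτ : τ ∈ Ioo s t) := h.profile τ (Ioo_subset_Icc_self hτ)
  have hu : ContinuousOn (Function.uncurry u) (Ioo s t ×ˢ univ) :=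
    h.continuousOn.mono (prod_mono_left Ioo_subset_Icc_self)
  exact (lowerSemicontinuousOn_ciSup (fun τ hτ => (hprofile τ hτ).bddAbove_range_abs) fun x =>
      (continuousOn_of_continuousOn_uncurry hu x).abs.lowerSemicontinuousOn).add
    (lowerSemicontinuousOn_integral (f := fun τ x => u τ x ^ 2 + v τ x ^ 2)
      ((hu.fun_pow 2).fun_add ((h.continuousOn_uncurry_primitive hγ).fun_pow 2))
      (fun τ _ x => add_nonneg (sq_nonneg _) (sq_nonneg _))
      fun τ hτ => (hprofile τ hτ).integrable_sq_add_sq)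

/-- The estimate `size_left_le` run backwards from a time near `s` prevents blow-up at `s`. -/
theorem exists_size_le_of_isBoundedUnder_Ioc (h : SlabSolution γ s t u ut ux v) (hγ : 0 < γ)
    (hst : s ≤ t)
    (hloc : ∀ τ ∈ Ioc s t, (𝓝 τ).IsBoundedUnder (· ≤ ·) fun τ => size (u τ) (v τ)) :
    ∃ C, ∀ τ ∈ Icc s t, size (u τ) (v τ) ≤ C := by
  rcases hst.eq_or_lt with rfl | hlt
  · exact ⟨size (u s) (v s), by simp⟩
  have hcompact (σ) (hσ : σ ∈ Ioc s t) : ∃ C, ∀ τ ∈ Icc σ t, size (u τ) (v τ) ≤ C := by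
    obtain ⟨C, hC⟩ := bddAbove_image_of_isBoundedUnder_nhdsWithin isCompact_Icc
      (fun τ (hτ : τ ∈ Icc σ t) => (hloc τ ⟨hσ.1.trans_le hτ.1, hτ.2⟩).mono nhdsWithin_le_nhds)
    exact ⟨C, fun τ hτ => hC (mem_image_of_mem _ hτ)⟩
  have hQ (σ) (hσ : σ ∈ Ioc s t) : ∫ x, u t x ^ 2 = ∫ x, u σ x ^ 2 := by
    obtain ⟨C, hC⟩ := hcompact σ hσ
    exact ((h.mono hσ.1.le le_rfl).integral_sq_eq_and_energy_eq hC (right_mem_Icc.2 hσ.2)).1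
  set q := ∫ x, u t x ^ 2
  have hq0 : 0 ≤ q := integral_nonneg fun x => sq_nonneg (u t x)
  obtain ⟨s₀, hs₀, hlen, hqlen⟩ : ∃ s₀ ∈ Ioc s t, s₀ - s ≤ 1 ∧ q * (s₀ - s) ≤ 1 := by
    have hmin : min t (s + 1 / (1 + q)) - s ≤ 1 / (1 + q) := by
      linarith [min_le_right t (s + 1 / (1 + q))]
    rw [le_div_iff₀ (by positivity)] at hmin
    have hpos : s < min t (s + 1 / (1 + q)) := lt_min hlt (lt_add_of_pos_right s (by positivity))
    exact ⟨_, ⟨hpos, min_le_left _ _⟩, by nlinarith, by nlinarith⟩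
  obtain ⟨C₀, hC₀⟩ := hcompact s₀ hs₀
  refine ⟨max (size (u s) (v s)) (max C₀ (sizeBound γ (size (u s₀) (v s₀)))), fun τ hτ => ?_⟩
  rcases hτ.1.eq_or_lt with rfl | hsτ
  · exact le_max_left _ _
  refine le_max_of_le_right ?_
  rcases le_total s₀ τ with hs₀τ | hτs₀
  · exact le_max_of_le_left (hC₀ τ ⟨hs₀τ, hτ.2⟩)
  obtain ⟨C, hC⟩ := hcompact τ ⟨hsτ, hτ.2⟩
  refine le_max_of_le_right ((h.mono hτ.1 hs₀.2).size_left_le hγ hτs₀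
    (fun σ hσ => hC σ ⟨hσ.1, hσ.2.trans hs₀.2⟩) (by linarith) ?_ le_rfl)
  rw [← hQ s₀ hs₀]
  exact (mul_le_mul_of_nonneg_left (by linarith) hq0).trans hqlen

theorem exists_size_le_of_isBoundedUnder_Ico (h : SlabSolution γ s t u ut ux v) (hγ : 0 < γ)
    (hst : s ≤ t)
    (hloc : ∀ τ ∈ Ico s t, (𝓝 τ).IsBoundedUnder (· ≤ ·) fun τ => size (u τ) (v τ)) :
    ∃ C, ∀ τ ∈ Icc s t, size (u τ) (v τ) ≤ C := by
  obtain ⟨C, hC⟩ := h.reverse.exists_size_le_of_isBoundedUnder_Ioc hγ (neg_le_neg hst)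
    fun τ hτ => by
      obtain ⟨K, hK⟩ := hloc (-τ) ⟨le_neg.1 hτ.2, neg_lt.1 hτ.1⟩
      simp only [size_comp_neg]
      exact ⟨K, eventually_map.2 ((continuous_neg.tendsto τ).eventually (eventually_map.1 hK))⟩
  refine ⟨C, fun τ hτ => ?_⟩
  simpa only [size_comp_neg, neg_neg] using hC (-τ) ⟨neg_le_neg hτ.2, neg_le_neg hτ.1⟩

theorem size_le_sizeBound_of_isBoundedUnder (h : SlabSolution γ s t u ut ux v) (hγ : 0 < γ)
    {a b : ℝ} (ha : a ∈ Ioo s t) (hb : b ∈ Ioo s t) (hab : |b - a| ≤ 1) (hNab : N * |b - a| ≤ 1)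
    (hN : size (u a) (v a) ≤ N)
    (hloc : ∀ τ ∈ uIcc a b, τ ≠ a → (𝓝 τ).IsBoundedUnder (· ≤ ·) fun τ => size (u τ) (v τ)) :
    size (u b) (v b) ≤ sizeBound γ N := by
  have hq : (∫ x, u a x ^ 2) * |b - a| ≤ 1 :=
    (mul_le_mul_of_nonneg_right ((h.profile a (Ioo_subset_Icc_self ha)).integral_sq_le_size.trans
      hN) (abs_nonneg _)).trans hNab
  rcases le_total a b with hle | hle
  · rw [abs_of_nonneg (sub_nonneg.2 hle)] at hab hq
    rw [uIcc_of_le hle] at hloc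
    have h' := h.mono ha.1.le hb.2.le
    obtain ⟨C, hC⟩ := h'.exists_size_le_of_isBoundedUnder_Ioc hγ hle
      fun τ hτ => hloc τ (Ioc_subset_Icc_self hτ) hτ.1.ne'
    exact h'.size_right_le hγ hle hC hab hq hN
  · rw [abs_sub_comm, abs_of_nonneg (sub_nonneg.2 hle)] at hab hq
    rw [uIcc_of_ge hle] at hloc
    have h' := h.mono hb.1.le ha.2.le
    obtain ⟨C, hC⟩ := h'.exists_size_le_of_isBoundedUnder_Ico hγ hle
      fun τ hτ => hloc τ (Ico_subset_Icc_self hτ) hτ.2.ne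
    exact h'.size_left_le hγ hle hC hab hq hN

theorem isBoundedUnder_size (h : SlabSolution γ s t u ut ux v) (hγ : 0 < γ) :
    ∀ τ ∈ Ioo s t, (𝓝 τ).IsBoundedUnder (· ≤ ·) fun τ => size (u τ) (v τ) := by
  refine isBoundedUnder_nhds_of_lowerSemicontinuousOn isOpen_Ioo (h.lowerSemicontinuousOn_size hγ)
    fun N => ⟨1 / (1 + |N|), by positivity, sizeBound γ N, fun a ha b hb hab hN hloc => ?_⟩
  rw [lt_div_iff₀ (by positivity)] at hab
  refine h.size_le_sizeBound_of_isBoundedUnder hγ ha hb ?_ ?_ hN hloc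
  · nlinarith [abs_nonneg N, abs_nonneg (b - a)]
  · nlinarith [le_abs_self N, abs_nonneg (b - a)]

theorem integral_sq_eq_and_energy_eq_of_lt (h : SlabSolution γ s t u ut ux v) (hγ : 0 < γ)
    (hst : s < t) :
    ∫ x, u t x ^ 2 = ∫ x, u s x ^ 2 ∧ energy γ (u t) (v t) = energy γ (u s) (v s) := by
  obtain ⟨c, hsc, hct⟩ := exists_between hst
  have hleft := h.mono le_rfl hct.le
  have hright := h.mono hsc.le le_rfl
  obtain ⟨C, hC⟩ := hleft.exists_size_le_of_isBoundedUnder_Ioc hγ hsc.le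
    fun τ hτ => h.isBoundedUnder_size hγ τ ⟨hτ.1, hτ.2.trans_lt hct⟩
  obtain ⟨K, hK⟩ := hright.exists_size_le_of_isBoundedUnder_Ico hγ hct.le
    fun τ hτ => h.isBoundedUnder_size hγ τ ⟨hsc.trans_le hτ.1, hτ.2⟩
  obtain ⟨hQs, hEs⟩ := hleft.integral_sq_eq_and_energy_eq hC (right_mem_Icc.2 hsc.le)
  obtain ⟨hQt, hEt⟩ := hright.integral_sq_eq_and_energy_eq hK (right_mem_Icc.2 hct.le)
  exact ⟨hQt.trans hQs, hEt.trans hEs⟩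

end SlabSolution

theorem hasDerivAt_integral_Iic {E : Type*} [NormedAddCommGroup E] [NormedSpace ℝ E]
    [CompleteSpace E] {f : ℝ → E} (hf : Integrable f) (hc : Continuous f) (x : ℝ) :
    HasDerivAt (fun x => ∫ y in Iic x, f y) (f x) x := by
  have hsplit (x : ℝ) : ∫ y in Iic x, f y = (∫ y in Iic 0, f y) + ∫ y in 0..x, f y := by
    rw [← integral_Iic_sub_Iic hf.integrableOn hf.integrableOn, add_sub_cancel]
  rw [funext hsplit]
  exact (hc.integral_hasStrictDerivAt 0 x).hasDerivAt.const_add _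

theorem decayingProfile_integral_Iic {f : ℝ → ℝ} (hf : Integrable f) (hc : Continuous f)
    (hf0 : Tendsto f (cocompact ℝ) (𝓝 0))
    (hf2 : Integrable fun x => (∫ y in Iic x, f y) ^ 2) :
    DecayingProfile f fun x => ∫ y in Iic x, f y where
  continuous := hc
  hasDerivAt := hasDerivAt_integral_Iic hf hc
  tendsto_zero := hf0
  integrable_sq := by
    obtain ⟨C, hC⟩ := bddAbove_range_norm_of_tendsto_zero_cocompact hc hf0
    simpa only [sq] using
      hf.bdd_mul hc.aestronglyMeasurable (Eventually.of_forall (forall_mem_range.1 hC))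
  integrable_primitive_sq := hf2

theorem slabSolution_of_isLineOHSolution {γ t : ℝ} {S : Set ℝ} {u : ℝ → ℝ → ℝ}
    (hsol : IsLineOHSolution γ S u) (hS : Icc 0 t ⊆ S)
    (hu : ∀ τ ∈ S, Tendsto (u τ) (cocompact ℝ) (𝓝 0))
    (hv : ∀ τ ∈ S, Integrable fun x => (∫ y in Iic x, u τ y) ^ 2) :
    SlabSolution γ 0 t u (fun τ x => deriv (fun σ => u σ x) τ) (fun τ => deriv (u τ))
      (fun τ x => ∫ y in Iic x, u τ y) where
  continuousOn := hsol.cont_u.mono (prod_mono_left hS)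
  continuousOn_ut := hsol.cont_ut.mono (prod_mono_left hS)
  continuousOn_ux := hsol.cont_ux.mono (prod_mono_left hS)
  hasDerivAt_ut τ hτ x := (hsol.diff_t τ (hS (Ioo_subset_Icc_self hτ)) x).hasDerivAt
  hasDerivAt_ux τ hτ x := (hsol.diff_x τ (hS (Ioo_subset_Icc_self hτ)) x).hasDerivAt
  profile τ hτ := decayingProfile_integral_Iic (hsol.integrable τ (hS hτ))
    (continuous_iff_continuousAt.2 fun x => (hsol.diff_x τ (hS hτ) x).continuousAt)
    (hu τ (hS hτ)) (hv τ (hS hτ))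
  eqn τ hτ := hsol.eqn τ (hS (Ioo_subset_Icc_self hτ)) hτ.1

end OstrovskyHunter

theorem line_conserved_quantities_general {γ T : ℝ} (hγ : 0 < γ) {u : ℝ → ℝ → ℝ}
    (hsol : IsLineOHSolution γ (Ico 0 T) u)
    (hudecay : ∀ t ∈ Ico 0 T, Tendsto (u t) (cocompact ℝ) (nhds 0))
    (hvL2 : ∀ t ∈ Ico 0 T, Integrable fun x => (∫ y in Iic x, u t y) ^ 2)
    {t : ℝ} (ht : t ∈ Ico 0 T) :
    ∫ x, u t x ^ 2 = ∫ x, u 0 x ^ 2 ∧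
      ∫ x, (γ * (∫ y in Iic x, u t y) ^ 2 + 1 / 3 * u t x ^ 3) =
        ∫ x, (γ * (∫ y in Iic x, u 0 y) ^ 2 + 1 / 3 * u 0 x ^ 3) := by
  rcases ht.1.eq_or_lt with rfl | htpos
  · exact ⟨rfl, rfl⟩
  · have hslab := OstrovskyHunter.slabSolution_of_isLineOHSolution hsol
      (fun τ hτ => ⟨hτ.1, hτ.2.trans_lt ht.2⟩) hudecay hvL2
    exact hslab.integral_sq_eq_and_energy_eq_of_lt hγ htpos

/-- conservation of `Q = ∫ u²` and `E = ∫ (γ v² + u³/3)` for a decaying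
classical solution on the line, where `v(t,x) = ∫_{-∞}^x u(t,y) dy`. -/
theorem line_conserved_quantities
    (γ T : ℝ) (hγ : 0 < γ) (hT : 0 < T) (u₀ : ℝ → ℝ) (u : ℝ → ℝ → ℝ)
    (hsol : IsLineOHSolution γ (Set.Ico 0 T) u) (h0 : u 0 = u₀)
    (hudecay : ∀ t ∈ Set.Ico (0 : ℝ) T,
      Filter.Tendsto (u t) Filter.atTop (nhds 0) ∧
      Filter.Tendsto (u t) Filter.atBot (nhds 0))
    (hvdecay : ∀ t ∈ Set.Ico (0 : ℝ) T,
      Filter.Tendsto (fun x => ∫ y in Set.Iic x, u t y) Filter.atTop (nhds 0) ∧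
      Filter.Tendsto (fun x => ∫ y in Set.Iic x, u t y) Filter.atBot (nhds 0))
    (hvint : ∀ t ∈ Set.Ico (0 : ℝ) T,
      MeasureTheory.Integrable (fun x => ∫ y in Set.Iic x, u t y))
    (hwdecay : ∀ t ∈ Set.Ico (0 : ℝ) T,
      Filter.Tendsto (fun x => ∫ y in Set.Iic x, (∫ z in Set.Iic y, u t z))
        Filter.atTop (nhds 0) ∧
      Filter.Tendsto (fun x => ∫ y in Set.Iic x, (∫ z in Set.Iic y, u t z))
        Filter.atBot (nhds 0))
    (huL2 : ∀ t ∈ Set.Ico (0 : ℝ) T, MeasureTheory.Integrable (fun x => (u t x) ^ 2))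
    (hvL2 : ∀ t ∈ Set.Ico (0 : ℝ) T,
      MeasureTheory.Integrable (fun x => (∫ y in Set.Iic x, u t y) ^ 2)) :
    ∀ t ∈ Set.Ico (0 : ℝ) T,
      (∫ x : ℝ, (u t x) ^ 2) = (∫ x : ℝ, (u₀ x) ^ 2) ∧
      (∫ x : ℝ, (γ * (∫ y in Set.Iic x, u t y) ^ 2 + (1/3) * (u t x) ^ 3))
        = ∫ x : ℝ, (γ * (∫ y in Set.Iic x, u₀ y) ^ 2 + (1/3) * (u₀ x) ^ 3) := by
  subst h0
  exact fun t ht => line_conserved_quantities_general hγ hsol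
    (fun τ hτ => cocompact_eq_atBot_atTop (α := ℝ) ▸ (hudecay τ hτ).2.sup (hudecay τ hτ).1) hvL2 ht
end
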